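/- Let β ∈ (1,2) with δ(β) = (1^m 0)^∞ for some m ≥ 1, and let [t_L, t_R) ⊂ [0, 1 − 1/β) be a β-Lyndon interval. Then for every t' ∈ (t_R, 1), dim_H K_β(t') < dim_H K_β(t_R). -/

import Mathlib

open Set Filter MeasureTheory

/-- The β-transformation `x ↦ βx (mod 1)`. -/
noncomputable def Tbeta (β x : ℝ) : ℝ := Int.fract (β * x)

/-- The survivor set `K_β(t) = {x ∈ [0,1) : T_β^n x ≥ t for all n ≥ 0}`. -/
def Kset (β t : ℝ) : Set ℝ := {x | x ∈ Set.Ico (0 : ℝ) 1 ∧ ∀ n : ℕ, t ≤ (Tbeta β)^[n] x}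

/-- Strict lexicographic order on sequences of naturals. -/
def seqLt (x y : ℕ → ℕ) : Prop := ∃ n, (∀ i, i < n → x i = y i) ∧ x n < y n

/-- Lexicographic order on sequences of naturals. -/
def seqLe (x y : ℕ → ℕ) : Prop := x = y ∨ seqLt x y

/-- The `n`-th iterate of the left shift. -/
def shiftN (n : ℕ) (x : ℕ → ℕ) : ℕ → ℕ := fun i => x (i + n)

/-- The sequence `w 0^∞`. -/
def wordSeq (w : List ℕ) : ℕ → ℕ := fun i => w.getD i 0

/-- The periodic sequence `w^∞`. -/
def perSeq (w : List ℕ) : ℕ → ℕ := fun i => w.getD (i % w.length) 0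

/-- The sequence obtained by concatenating the word `w` with the sequence `x`. -/
def catSeq (w : List ℕ) (x : ℕ → ℕ) : ℕ → ℕ :=
  fun i => if i < w.length then w.getD i 0 else x (i - w.length)

/-- The greedy β-expansion of `t`: the digit `b_{i+1}` is `⌊β T_β^i t⌋`. -/
noncomputable def greedy (β t : ℝ) : ℕ → ℕ := fun i => (⌊β * (Tbeta β)^[i] t⌋).toNat

/-- `d` is the quasi-greedy β-expansion of `1`: the lexicographically largest
sequence in `{0,1}^ℕ` not ending in `0^∞` whose digits sum to `1` in base `β`. -/
def IsQuasiGreedy (β : ℝ) (d : ℕ → ℕ) : Prop :=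
  (∀ i, d i ≤ 1) ∧ (¬ ∃ N, ∀ n, N ≤ n → d n = 0) ∧
  (∑' i : ℕ, (d i : ℝ) / β ^ (i + 1) = 1) ∧
  ∀ e : ℕ → ℕ, (∀ i, e i ≤ 1) → (¬ ∃ N, ∀ n, N ≤ n → e n = 0) →
    (∑' i : ℕ, (e i : ℝ) / β ^ (i + 1) = 1) → seqLe e d

/-- `s = s_1…s_p` is a β-Lyndon word: `s_{i+1}…s_p ≻ s_1…s_{p-i}` for `1 ≤ i < p`
and `σ^n(s^∞) ≺ δ(β)` for all `n ≥ 0`. -/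
def IsBetaLyndon (β : ℝ) (s : List ℕ) : Prop :=
  s ≠ [] ∧ (∀ a ∈ s, a ≤ 1) ∧
  (∀ i, 1 ≤ i → i < s.length →
    seqLt (wordSeq (s.take (s.length - i))) (wordSeq (s.drop i))) ∧
  (∀ d : ℕ → ℕ, IsQuasiGreedy β d → ∀ n : ℕ, seqLt (shiftN n (perSeq s)) d)

/-- Left endpoint `t_L = Σ_{i=1}^p s_i β^{-i}` of the β-Lyndon interval generated by `s`. -/
noncomputable def lyndonLeft (β : ℝ) (s : List ℕ) : ℝ :=
  ∑ i ∈ Finset.range s.length, (s.getD i 0 : ℝ) / β ^ (i + 1)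

/-- Right endpoint `t_R = (β^p/(β^p - 1)) t_L` of the β-Lyndon interval generated by `s`. -/
noncomputable def lyndonRight (β : ℝ) (s : List ℕ) : ℝ :=
  β ^ s.length / (β ^ s.length - 1) * lyndonLeft β s

/-- The union of all β-Lyndon intervals `[t_L, t_R)`. -/
noncomputable def lyndonUnionIco (β : ℝ) : Set ℝ :=
  ⋃ s ∈ {s : List ℕ | IsBetaLyndon β s}, Set.Ico (lyndonLeft β s) (lyndonRight β s)

/-- The symbolic survivor set `K̃_β(t)` with upper bound sequence `d = δ(β)`. -/
def Ktilde (β t : ℝ) (d : ℕ → ℕ) : Set (ℕ → ℕ) :=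
  {x | (∀ i, x i ≤ 1) ∧ ∀ n : ℕ, seqLe (greedy β t) (shiftN n x) ∧ seqLe (shiftN n x) d}

/-- The set-valued bifurcation set `E_β`. -/
def Eset (β : ℝ) : Set ℝ :=
  {t | t ∈ Set.Ico (0 : ℝ) 1 ∧ ∀ t', t < t' → t' < 1 → Kset β t' ≠ Kset β t}

/-- The dimension bifurcation set `B_β`. -/
def Bset (β : ℝ) : Set ℝ :=
  {t | t ∈ Set.Ico (0 : ℝ) 1 ∧ ∀ t', t < t' → t' < 1 → dimH (Kset β t') ≠ dimH (Kset β t)}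

/-- `β` is a multinacci number: `β^{m+1} = β^m + ⋯ + β + 1` for some `m ≥ 1`. -/
def IsMultinacci (β : ℝ) : Prop :=
  ∃ m : ℕ, 1 ≤ m ∧ β ^ (m + 1) = ∑ i ∈ Finset.range (m + 1), β ^ i

/-!
Let `S = s^∞`, so that `t_R` is the value of `S` in base `β`. If `t > t_R`, then for some `H` no
point of `K_β(t)` has the length-`H` prefix of `S` in its expansion, since that factor would start
a tail of value at most `t_R + β^{-H} < t`. Covering by cylinders bounds `dim_H K_β(t)` by the
growth rate of the words that occur in expansions of points of `K_β(t_R)` and avoid this prefix.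
On the other hand, because `δ(β) = (1^m 0)^∞`, such a word `w` can be padded to
`0 1^a w 1^b (01^m)^r`, with `a, b ≤ m` and `r` fixed, so that padded words may be concatenated
freely. Hence a padded copy of the prefix of `S` can be inserted into an avoiding word of length
`n` at a number of positions proportional to `n`, at a bounded cost in length. Avoidance makes the
position recoverable, so for large `n` some finite set of blocks grows strictly faster than the
avoiding words, and the free concatenations of these blocks form a subset of `K_β(t_R)` of larger
dimension.
-/

section Dimension

lemma rpow_pow_logb {ρ b : ℝ} (hρ : 1 < ρ) (hb : 0 < b) (k : ℕ) :
    (ρ ^ k) ^ Real.logb ρ b = b ^ k := by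
  have hρ0 : 0 < ρ := one_pos.trans hρ
  rw [← Real.rpow_pow_comm hρ0.le, Real.rpow_logb hρ0 hρ.ne' hb]

lemma le_dimH_of_holderOnWith_of_Icc_subset {X : Type*} [EMetricSpace X] {s : Set X} {f : X → ℝ}
    {C r : NNReal} (hf : HolderOnWith C r f s) (hr : 0 < r) (hs : Icc (0 : ℝ) 1 ⊆ f '' s) :
    (r : ENNReal) ≤ dimH s := by
  have hIcc : dimH (Icc (0 : ℝ) 1) = 1 := by
    have hint : (interior (Icc (0 : ℝ) 1)).Nonempty := by simp
    simpa using Real.dimH_of_nonempty_interior hint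
  have hle : (1 : ENNReal) ≤ dimH s / r :=
    hIcc ▸ (dimH_mono hs).trans (hf.dimH_image_le hr)
  rwa [ENNReal.le_div_iff_mul_le (Or.inl (by simpa using hr.ne')) (Or.inl ENNReal.coe_ne_top),
    one_mul] at hle

lemma abs_ofDigits_sub_le_of_separated {b : ℕ} (hb : 1 < b) {ρ ε δ : ℝ} (hρ : 1 < ρ) (hε : 0 < ε)
    {x y : ℕ → Fin b} (hδ : ε / ρ ^ (PiNat.firstDiff x y + 1) ≤ δ) :
    |Real.ofDigits x - Real.ofDigits y| ≤ b / ε ^ Real.logb ρ b * δ ^ Real.logb ρ b := by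
  have hb1 : (1 : ℝ) < b := by exact_mod_cast hb
  have hb0 : (0 : ℝ) < b := one_pos.trans hb1
  set r := Real.logb ρ b
  have hr : 0 < r := Real.logb_pos hρ hb1
  have hpow : ε ^ r / b ^ (PiNat.firstDiff x y + 1) ≤ δ ^ r := by
    rw [← rpow_pow_logb hρ hb0, ← Real.div_rpow hε.le (by positivity)]
    exact Real.rpow_le_rpow (by positivity) hδ hr.le
  calc |Real.ofDigits x - Real.ofDigits y| ≤ ((b : ℝ) ^ PiNat.firstDiff x y)⁻¹ :=
        Real.abs_ofDigits_sub_ofDigits_le fun _ ↦ PiNat.apply_eq_of_lt_firstDiff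
    _ = b / ε ^ r * (ε ^ r / b ^ (PiNat.firstDiff x y + 1)) := by
        have : ε ^ r ≠ 0 := by positivity
        field_simp
        ring
    _ ≤ b / ε ^ r * δ ^ r := by gcongr

lemma le_dimH_range_of_separated_fin {X : Type*} [MetricSpace X] {b : ℕ} (hb : 1 < b) {ρ ε : ℝ}
    (hρ : 1 < ρ) (hε : 0 < ε) (g : (ℕ → Fin b) → X)
    (hg : ∀ x y, x ≠ y → ε / ρ ^ (PiNat.firstDiff x y + 1) ≤ dist (g x) (g y)) :
    ENNReal.ofReal (Real.logb ρ b) ≤ dimH (range g) := by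
  have : NeZero b := ⟨by omega⟩
  set r := Real.logb ρ b
  have hr : 0 < r := Real.logb_pos hρ (by exact_mod_cast hb)
  have hinj : Function.Injective g := by
    intro x y hxy
    by_contra hne
    have : 0 < ε / ρ ^ (PiNat.firstDiff x y + 1) := by positivity
    exact this.not_ge (by simpa [hxy] using hg x y hne)
  let f : X → ℝ := fun p ↦ Real.ofDigits (Function.invFun g p)
  have hfg (x) : f (g x) = Real.ofDigits x := by
    simp only [f, Function.leftInverse_invFun hinj x]
  have hHolder : HolderOnWith (b / ε ^ r).toNNReal r.toNNReal f (range g) := by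
    rintro _ ⟨x, rfl⟩ _ ⟨y, rfl⟩
    rcases eq_or_ne x y with rfl | hxy
    · simp
    rw [edist_dist, edist_dist, Real.coe_toNNReal _ hr.le,
      ENNReal.ofReal_rpow_of_nonneg dist_nonneg hr.le, ← ENNReal.ofReal,
      ← ENNReal.ofReal_mul (by positivity), hfg, hfg, Real.dist_eq]
    exact ENNReal.ofReal_le_ofReal (abs_ofDigits_sub_le_of_separated hb hρ hε (hg x y hxy))
  have honto : Icc (0 : ℝ) 1 ⊆ f '' range g := by
    intro y hy
    obtain ⟨x, -, rfl⟩ := Real.ofDigits_SurjOn (b := b) hb hy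
    exact ⟨g x, mem_range_self x, hfg x⟩
  exact le_dimH_of_holderOnWith_of_Icc_subset hHolder (by simpa using hr) honto

theorem le_dimH_range_of_separated {ι X : Type*} [Fintype ι] [MetricSpace X] {ρ ε : ℝ}
    (hρ : 1 < ρ) (hε : 0 < ε) (g : (ℕ → ι) → X)
    (hg : ∀ x y, x ≠ y → ε / ρ ^ (PiNat.firstDiff x y + 1) ≤ dist (g x) (g y)) :
    ENNReal.ofReal (Real.logb ρ (Fintype.card ι)) ≤ dimH (range g) := by
  rcases le_or_gt (Fintype.card ι) 1 with hle | hlt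
  · have : Real.logb ρ (Fintype.card ι) = 0 := by interval_cases Fintype.card ι <;> simp
    simp [this]
  let e := (Fintype.equivFin ι).symm
  have hrange : range (fun x ↦ g (e ∘ x)) ⊆ range g := range_comp_subset_range (e ∘ ·) g
  refine (le_dimH_range_of_separated_fin hlt hρ hε _ fun x y hxy ↦ ?_).trans (dimH_mono hrange)
  have hne : e ∘ x ≠ e ∘ y := fun h ↦ hxy (e.injective.comp_left h)
  have hfirst : PiNat.firstDiff (e ∘ x) (e ∘ y) = PiNat.firstDiff x y :=
    eq_of_forall_le_iff fun n ↦ by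
      simp only [← PiNat.mem_cylinder_iff_le_firstDiff hne,
        ← PiNat.mem_cylinder_iff_le_firstDiff hxy, PiNat.mem_cylinder_iff,
        Function.comp_apply, e.injective.eq_iff]
  exact hfirst ▸ hg _ _ hne

theorem dimH_le_of_cover {ι X : Type*} [Fintype ι] [Nonempty ι] [EMetricSpace X] {ρ : ℝ}
    (hρ : 1 < ρ) {s : Set X} (t : ∀ k : ℕ, (Fin k → ι) → Set X)
    (hdiam : ∀ k v, Metric.ediam (t k v) ≤ ENNReal.ofReal (1 / ρ ^ k))
    (hcover : ∀ k, s ⊆ ⋃ v, t k v) :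
    dimH s ≤ ENNReal.ofReal (Real.logb ρ (Fintype.card ι)) := by
  borelize X
  have hcard : (1 : ℝ) ≤ Fintype.card ι := by exact_mod_cast Fintype.card_pos
  have hcard0 : (0 : ℝ) < Fintype.card ι := one_pos.trans_le hcard
  set d := Real.logb ρ (Fintype.card ι)
  have hd : 0 ≤ d := Real.logb_nonneg hρ hcard
  have hscale : Tendsto (fun k : ℕ ↦ ENNReal.ofReal (1 / ρ ^ k)) atTop (nhds 0) := by
    rw [← ENNReal.ofReal_zero]
    exact (ENNReal.continuous_ofReal.tendsto 0).comp
      (tendsto_const_nhds.div_atTop (tendsto_pow_atTop_atTop_of_one_lt hρ))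
  have hsum (k : ℕ) : ∑ v, Metric.ediam (t k v) ^ d ≤ 1 := by
    calc ∑ v, Metric.ediam (t k v) ^ d
        ≤ ∑ _v : Fin k → ι, ENNReal.ofReal (1 / ρ ^ k) ^ d :=
          Finset.sum_le_sum fun v _ ↦ ENNReal.rpow_le_rpow (hdiam k v) hd
      _ = 1 := by
          rw [Finset.sum_const, Finset.card_univ, Fintype.card_fun, Fintype.card_fin,
            ENNReal.ofReal_rpow_of_nonneg (by positivity) hd, one_div,
            Real.inv_rpow (by positivity), rpow_pow_logb hρ hcard0, nsmul_eq_mul,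
            ← ENNReal.ofReal_natCast, ← ENNReal.ofReal_mul (by positivity), Nat.cast_pow,
            mul_inv_cancel₀ (by positivity), ENNReal.ofReal_one]
  have hmeasure : Measure.hausdorffMeasure d s ≤ 1 :=
    (Measure.hausdorffMeasure_le_liminf_sum d s _ hscale t (.of_forall hdiam)
      (.of_forall hcover)).trans (liminf_le_of_frequently_le' (.of_forall hsum))
  refine dimH_le_of_hausdorffMeasure_ne_top (d := d.toNNReal) ?_
  rw [Real.coe_toNNReal _ hd]
  exact ne_top_of_le_ne_top ENNReal.one_ne_top hmeasure

end Dimension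

section BetaValue

/-- The real number `Σ_{i ≥ 0} z_i β^{-(i+1)}` represented in base `β` by the binary sequence `z`,
with `true` as the digit `1`. -/
noncomputable def betaValue (β : ℝ) (z : Stream' Bool) : ℝ :=
  ∑' i, ((z.get i).toNat : ℝ) / β ^ (i + 1)

variable {β : ℝ} {y z : Stream' Bool}

lemma digit_div_pow_le (hβ : 1 < β) (z : Stream' Bool) (i : ℕ) :
    ((z.get i).toNat : ℝ) / β ^ (i + 1) ≤ β⁻¹ ^ i := by
  have hdigit : ((z.get i).toNat : ℝ) ≤ 1 := by exact_mod_cast Bool.toNat_le _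
  rw [inv_pow, ← one_div]
  gcongr
  · exact hβ.le
  · exact i.le_succ

lemma summable_digit_div_pow (hβ : 1 < β) (z : Stream' Bool) :
    Summable fun i ↦ ((z.get i).toNat : ℝ) / β ^ (i + 1) :=
  .of_nonneg_of_le (fun _ ↦ by positivity) (digit_div_pow_le hβ z)
    (summable_geometric_of_lt_one (by positivity) (inv_lt_one_of_one_lt₀ hβ))

lemma betaValue_nonneg (hβ : 1 < β) (z : Stream' Bool) : 0 ≤ betaValue β z :=
  tsum_nonneg fun _ ↦ by positivity

lemma betaValue_le_inv_one_sub_inv (hβ : 1 < β) (z : Stream' Bool) :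
    betaValue β z ≤ (1 - β⁻¹)⁻¹ := by
  have hβ' := inv_lt_one_of_one_lt₀ hβ
  rw [← tsum_geometric_of_lt_one (by positivity) hβ']
  exact (summable_digit_div_pow hβ z).tsum_le_tsum (digit_div_pow_le hβ z)
    (summable_geometric_of_lt_one (by positivity) hβ')

lemma betaValue_eq_sum_add (hβ : 1 < β) (z : Stream' Bool) (n : ℕ) :
    betaValue β z = ∑ i ∈ Finset.range n, ((z.get i).toNat : ℝ) / β ^ (i + 1)
      + betaValue β (z.drop n) / β ^ n := by
  rw [betaValue, ← (summable_digit_div_pow hβ z).sum_add_tsum_nat_add n, betaValue,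
    ← tsum_div_const]
  congr 1
  refine tsum_congr fun i ↦ ?_
  rw [Stream'.get_drop, div_div, ← pow_add, Nat.add_comm n i, Nat.add_right_comm]

lemma betaValue_eq_head_add (hβ : 1 < β) (z : Stream' Bool) :
    betaValue β z = ((z.get 0).toNat + betaValue β (z.drop 1)) / β := by
  rw [betaValue_eq_sum_add hβ z 1]
  simp [add_div]

lemma take_eq_take_iff {n : ℕ} : y.take n = z.take n ↔ ∀ i < n, y.get i = z.get i := by
  simp [List.ext_getElem_iff, Stream'.take_get]

lemma take_lt_take_iff {n : ℕ} :
    y.take n < z.take n ↔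
      ∃ k < n, y.take k = z.take k ∧ y.get k = false ∧ z.get k = true := by
  have (k : ℕ) : y.get k < z.get k ↔ y.get k = false ∧ z.get k = true := Bool.lt_iff
  simp only [List.lt_iff_exists, Stream'.length_take, lt_irrefl, and_false, false_or,
    Stream'.take_get, exists_prop, this, take_eq_take_iff]
  grind

lemma betaValue_sub_of_take_eq (hβ : 1 < β) {n : ℕ} (h : y.take n = z.take n) :
    betaValue β z - betaValue β y = (betaValue β (z.drop n) - betaValue β (y.drop n)) / β ^ n := by
  have hsum : ∑ i ∈ Finset.range n, ((y.get i).toNat : ℝ) / β ^ (i + 1)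
      = ∑ i ∈ Finset.range n, ((z.get i).toNat : ℝ) / β ^ (i + 1) :=
    Finset.sum_congr rfl fun i hi ↦ by rw [take_eq_take_iff.1 h i (Finset.mem_range.1 hi)]
  rw [betaValue_eq_sum_add hβ z n, betaValue_eq_sum_add hβ y n, hsum]
  ring

lemma abs_betaValue_sub_le_of_take_eq (hβ : 1 < β) {n : ℕ} (h : y.take n = z.take n)
    (hy : betaValue β (y.drop n) ≤ 1) (hz : betaValue β (z.drop n) ≤ 1) :
    |betaValue β z - betaValue β y| ≤ 1 / β ^ n := by
  have hpow : 0 < β ^ n := by positivity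
  rw [betaValue_sub_of_take_eq hβ h, abs_div, abs_of_pos hpow]
  gcongr
  rw [abs_le]
  constructor <;> linarith [betaValue_nonneg hβ (y.drop n), betaValue_nonneg hβ (z.drop n)]

lemma betaValue_add_le_of_take_lt (hβ : 1 < β) {ε : ℝ} (hε : 0 ≤ ε) {n : ℕ}
    (h : y.take n < z.take n) (hy : ∀ i, betaValue β (y.drop i) ≤ 1 - ε) :
    betaValue β y + ε / β ^ n ≤ betaValue β z := by
  obtain ⟨k, hkn, hk, hyk, hzk⟩ := take_lt_take_iff.1 h
  have hsub := betaValue_sub_of_take_eq hβ hk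
  have hdigit : ε / β ≤ betaValue β (z.drop k) - betaValue β (y.drop k) := by
    rw [betaValue_eq_head_add hβ (z.drop k), betaValue_eq_head_add hβ (y.drop k), ← sub_div]
    simp only [Stream'.get_drop, add_zero, hyk, hzk, Stream'.drop_drop]
    gcongr
    simp only [Bool.toNat_true, Bool.toNat_false, Nat.cast_one, Nat.cast_zero, zero_add]
    linarith [hy (k + 1), betaValue_nonneg hβ (z.drop (k + 1))]
  have : ε / β ^ n ≤ betaValue β z - betaValue β y := by
    calc ε / β ^ n ≤ ε / β ^ (k + 1) := by
          gcongr
          exacts [hβ.le, hkn]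
      _ = ε / β / β ^ k := by rw [pow_succ', div_div]
      _ ≤ _ := by rw [hsub]; gcongr
  linarith

lemma betaValue_le_of_take_lt (hβ : 1 < β) {n : ℕ} (h : y.take n < z.take n)
    (hy : ∀ i, betaValue β (y.drop i) ≤ 1) : betaValue β y ≤ betaValue β z := by
  simpa using betaValue_add_le_of_take_lt hβ le_rfl h (by simpa using hy)

lemma div_pow_le_abs_betaValue_sub (hβ : 1 < β) {ε : ℝ} (hε : 0 ≤ ε) {n : ℕ}
    (h : y.take n ≠ z.take n) (hy : ∀ i, betaValue β (y.drop i) ≤ 1 - ε)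
    (hz : ∀ i, betaValue β (z.drop i) ≤ 1 - ε) :
    ε / β ^ n ≤ |betaValue β y - betaValue β z| := by
  rcases lt_or_gt_of_ne h with hlt | hlt
  · rw [abs_sub_comm]
    exact (le_sub_iff_add_le'.2 (betaValue_add_le_of_take_lt hβ hε hlt hy)).trans (le_abs_self _)
  · exact (le_sub_iff_add_le'.2 (betaValue_add_le_of_take_lt hβ hε hlt hz)).trans (le_abs_self _)

end BetaValue

section RunFree

/-- The binary sequence `z` has no `m + 1` consecutive ones. -/
def RunFree (m : ℕ) (z : Stream' Bool) : Prop :=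
  ∀ i, ∃ j ≤ m, z.get (i + j) = false

variable {β : ℝ} {m : ℕ} {z : Stream' Bool}

lemma RunFree.drop (hz : RunFree m z) (n : ℕ) : RunFree m (z.drop n) := by
  intro i
  simpa only [Stream'.get_drop, add_assoc] using hz (n + i)

lemma betaValue_sub_one_of_first_zero (hβ : 1 < β)
    (hm : ∑ i ∈ Finset.range (m + 1), 1 / β ^ (i + 1) = 1) {j : ℕ} (hjm : j ≤ m)
    (hones : ∀ i < j, z.get i = true) (hzero : z.get j = false) :
    betaValue β z - 1 = (betaValue β (z.drop (j + 1)) - 1) / β ^ (j + 1)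
      - ∑ i ∈ Finset.Ico (j + 1) (m + 1), 1 / β ^ (i + 1) := by
  have hdigits : ∑ i ∈ Finset.range (j + 1), ((z.get i).toNat : ℝ) / β ^ (i + 1)
      = ∑ i ∈ Finset.range j, 1 / β ^ (i + 1) := by
    rw [Finset.sum_range_succ, hzero]
    simpa using Finset.sum_congr rfl fun i hi ↦ by simp [hones i (Finset.mem_range.1 hi)]
  have hsplit := Finset.sum_range_add_sum_Ico (fun i ↦ 1 / β ^ (i + 1)) (Nat.succ_le_succ hjm)
  rw [Finset.sum_range_succ, hm] at hsplit
  rw [betaValue_eq_sum_add hβ z (j + 1), hdigits, sub_div]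
  linarith

lemma RunFree.exists_first_zero (hz : RunFree m z) :
    ∃ j ≤ m, z.get j = false ∧ ∀ i < j, z.get i = true := by
  obtain ⟨j, hj, hzj⟩ := hz 0
  rw [zero_add] at hzj
  have hex : ∃ j, z.get j = false := ⟨j, hzj⟩
  refine ⟨Nat.find hex, (Nat.find_min' hex hzj).trans hj, Nat.find_spec hex, fun i hi ↦ ?_⟩
  simpa using Nat.find_min hex hi

-- Since `1 = Σ_{i ≤ m} β^{-(i+1)}`, the defect `1 - value` only shrinks by a factor `β^{j+1}` when
-- a block `1^j 0` is removed.
lemma RunFree.betaValue_sub_one_le (hz : RunFree m z) (hβ : 1 < β)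
    (hm : ∑ i ∈ Finset.range (m + 1), 1 / β ^ (i + 1) = 1) {q : ℕ} (hq : z.get q = false) :
    betaValue β z - 1 ≤ (betaValue β (z.drop (q + 1)) - 1) / β ^ (q + 1) := by
  induction q using Nat.strong_induction_on generalizing z with
  | _ q ih =>
    obtain ⟨j, hjm, hzero, hones⟩ := hz.exists_first_zero
    have hjq : j ≤ q := by
      by_contra! hlt
      simp [hones q hlt] at hq
    have hrest : 0 ≤ ∑ i ∈ Finset.Ico (j + 1) (m + 1), 1 / β ^ (i + 1) :=
      Finset.sum_nonneg fun i _ ↦ by positivity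
    have hfirst := betaValue_sub_one_of_first_zero hβ hm hjm hones hzero
    obtain rfl | hlt := hjq.eq_or_lt
    · linarith
    obtain ⟨d, rfl⟩ := Nat.exists_eq_add_of_lt hlt
    have htail := ih d (by omega) (hz.drop (j + 1))
      (by rw [Stream'.get_drop, ← hq]; congr 1; omega)
    have hindex : j + 1 + (d + 1) = j + d + 1 + 1 := by omega
    calc betaValue β z - 1 ≤ (betaValue β (z.drop (j + 1)) - 1) / β ^ (j + 1) := by linarith
      _ ≤ (betaValue β ((z.drop (j + 1)).drop (d + 1)) - 1) / β ^ (d + 1) / β ^ (j + 1) := by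
          gcongr
      _ = _ := by
          rw [div_div, ← pow_add, Stream'.drop_drop, add_comm (d + 1), hindex]

lemma RunFree.betaValue_le_one (hz : RunFree m z) (hβ : 1 < β)
    (hm : ∑ i ∈ Finset.range (m + 1), 1 / β ^ (i + 1) = 1) : betaValue β z ≤ 1 := by
  have hlim : Tendsto (fun n : ℕ ↦ (1 - β⁻¹)⁻¹ / β ^ n) atTop (nhds 0) :=
    tendsto_const_nhds.div_atTop (tendsto_pow_atTop_atTop_of_one_lt hβ)
  refine sub_nonpos.1 (ge_of_tendsto' hlim fun n ↦ ?_)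
  obtain ⟨j, -, hj⟩ := hz n
  calc betaValue β z - 1 ≤ (betaValue β (z.drop (n + j + 1)) - 1) / β ^ (n + j + 1) :=
        hz.betaValue_sub_one_le hβ hm hj
    _ ≤ (1 - β⁻¹)⁻¹ / β ^ (n + j + 1) := by
        gcongr
        linarith [betaValue_le_inv_one_sub_inv hβ (z.drop (n + j + 1))]
    _ ≤ (1 - β⁻¹)⁻¹ / β ^ n := by
        have := (betaValue_nonneg hβ z).trans (betaValue_le_inv_one_sub_inv hβ z)
        gcongr
        · exact hβ.le
        · omega

lemma RunFree.betaValue_le_one_sub (hz : RunFree m z) (hβ : 1 < β)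
    (hm : ∑ i ∈ Finset.range (m + 1), 1 / β ^ (i + 1) = 1) {q j : ℕ} (hq : z.get q = false)
    (hjm : j < m) (hj : z.get (q + 1 + j) = false) :
    betaValue β z ≤ 1 - 1 / β ^ (q + m + 2) := by
  have htail : betaValue β (z.drop (q + 1)) - 1 ≤ -(1 / β ^ (m + 1)) := by
    obtain ⟨i, him, hzero, hones⟩ := (hz.drop (q + 1)).exists_first_zero
    have hij : i ≤ j := by
      by_contra! hlt
      simpa [Stream'.get_drop, hj] using hones j hlt
    rw [betaValue_sub_one_of_first_zero hβ hm him hones hzero]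
    have hlast : 1 / β ^ (m + 1) ≤ ∑ l ∈ Finset.Ico (i + 1) (m + 1), 1 / β ^ (l + 1) :=
      Finset.single_le_sum (f := fun l ↦ 1 / β ^ (l + 1)) (fun l _ ↦ by positivity)
        (Finset.mem_Ico.2 ⟨by omega, by omega⟩)
    have hle := ((hz.drop (q + 1)).drop (i + 1)).betaValue_le_one hβ hm
    have : (betaValue β ((z.drop (q + 1)).drop (i + 1)) - 1) / β ^ (i + 1) ≤ 0 :=
      div_nonpos_of_nonpos_of_nonneg (by linarith) (by positivity)
    linarith
  have hpow : -(1 / β ^ (m + 1)) / β ^ (q + 1) = -(1 / β ^ (q + m + 2)) := by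
    rw [neg_div, div_div, ← pow_add]
    congr 3
    omega
  have : betaValue β z - 1 ≤ -(1 / β ^ (m + 1)) / β ^ (q + 1) :=
    (hz.betaValue_sub_one_le hβ hm hq).trans (by gcongr)
  linarith

end RunFree

section BetaTransformation

variable {β x t : ℝ} {z : Stream' Bool}

lemma Tbeta_iterate_betaValue (hβ : 1 < β) (hz : ∀ n, betaValue β (z.drop n) < 1) (n : ℕ) :
    (Tbeta β)^[n] (betaValue β z) = betaValue β (z.drop n) := by
  induction n with
  | zero => rfl
  | succ n ih =>
    have hβ0 : β ≠ 0 := by positivity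
    rw [Function.iterate_succ_apply', ih, Tbeta, betaValue_eq_head_add hβ, mul_div_cancel₀ _ hβ0,
      Stream'.drop_drop, Int.fract_natCast_add,
      Int.fract_eq_self.2 ⟨betaValue_nonneg hβ _, hz (n + 1)⟩]

lemma betaValue_mem_Kset (hβ : 1 < β) (hz : ∀ n, betaValue β (z.drop n) < 1)
    (ht : ∀ n, t ≤ betaValue β (z.drop n)) : betaValue β z ∈ Kset β t :=
  ⟨⟨betaValue_nonneg hβ z, hz 0⟩, fun n ↦ (Tbeta_iterate_betaValue hβ hz n).symm ▸ ht n⟩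

/-- The greedy digits `⌊β T_β^i x⌋` of `x` in base `β ∈ (1,2)`, as a binary sequence. -/
noncomputable def betaDigits (β x : ℝ) : Stream' Bool :=
  fun i ↦ decide (1 ≤ β * (Tbeta β)^[i] x)

lemma betaDigits_drop (β x : ℝ) (n : ℕ) :
    (betaDigits β x).drop n = betaDigits β ((Tbeta β)^[n] x) := by
  ext i
  rw [Stream'.get_drop]
  simp only [Stream'.get, betaDigits, ← Function.iterate_add_apply, add_comm]

lemma Tbeta_iterate_mem_Ico (β : ℝ) (hx : x ∈ Ico (0 : ℝ) 1) (n : ℕ) :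
    (Tbeta β)^[n] x ∈ Ico (0 : ℝ) 1 := by
  have hmaps : MapsTo (Tbeta β) (Ico 0 1) (Ico 0 1) :=
    fun _ _ ↦ ⟨Int.fract_nonneg _, Int.fract_lt_one _⟩
  exact hmaps.iterate n hx

lemma eq_head_add_Tbeta_div (hβ : β ∈ Ioo (1 : ℝ) 2) (hx : x ∈ Ico (0 : ℝ) 1) :
    x = (((betaDigits β x).get 0).toNat + Tbeta β x) / β := by
  have hβ0 : 0 < β := one_pos.trans hβ.1
  have hnonneg : 0 ≤ β * x := mul_nonneg hβ0.le hx.1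
  have hlt : β * x < 2 := by nlinarith [hβ.2, hx.1, hx.2]
  have hfloor : (⌊β * x⌋ : ℝ) = ((betaDigits β x).get 0).toNat := by
    by_cases h : 1 ≤ β * x
    · have : ⌊β * x⌋ = 1 := Int.floor_eq_iff.2 ⟨by simpa, by norm_num; linarith⟩
      simp [this, betaDigits, Stream'.get, h]
    · have : ⌊β * x⌋ = 0 := Int.floor_eq_iff.2 ⟨by simpa, by push Not at h; simpa⟩
      simp [this, betaDigits, Stream'.get, h]
  rw [← hfloor, Tbeta, Int.floor_add_fract, mul_div_cancel_left₀ _ hβ0.ne']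

lemma betaValue_betaDigits (hβ : β ∈ Ioo (1 : ℝ) 2) (hx : x ∈ Ico (0 : ℝ) 1) :
    betaValue β (betaDigits β x) = x := by
  have hdiff (n : ℕ) : betaValue β (betaDigits β x) - x
      = (betaValue β ((betaDigits β x).drop n) - (Tbeta β)^[n] x) / β ^ n := by
    induction n with
    | zero => simp [Stream'.drop_zero]
    | succ n ih =>
      have hT := eq_head_add_Tbeta_div hβ (Tbeta_iterate_mem_Ico β hx n)
      rw [← betaDigits_drop, ← Function.iterate_succ_apply' (Tbeta β)] at hT
      have hV := betaValue_eq_head_add hβ.1 ((betaDigits β x).drop n)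
      rw [Stream'.drop_drop] at hV
      rw [ih, hV, hT, ← sub_div, add_sub_add_left_eq_sub, div_div, pow_succ']
  have hlim : Tendsto (fun n : ℕ ↦ ((1 - β⁻¹)⁻¹ + 1) / β ^ n) atTop (nhds 0) :=
    tendsto_const_nhds.div_atTop (tendsto_pow_atTop_atTop_of_one_lt hβ.1)
  refine sub_eq_zero.1 (abs_nonpos_iff.1 (ge_of_tendsto' hlim fun n ↦ ?_))
  have hpow : 0 < β ^ n := pow_pos (one_pos.trans hβ.1) n
  rw [hdiff n, abs_div, abs_of_pos hpow]
  gcongr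
  obtain ⟨h0, h1⟩ := Tbeta_iterate_mem_Ico β hx n
  have hV0 := betaValue_nonneg hβ.1 ((betaDigits β x).drop n)
  have hV1 := betaValue_le_inv_one_sub_inv hβ.1 ((betaDigits β x).drop n)
  rw [abs_le]
  constructor <;> linarith

lemma betaValue_betaDigits_drop (hβ : β ∈ Ioo (1 : ℝ) 2) (hx : x ∈ Ico (0 : ℝ) 1)
    (n : ℕ) : betaValue β ((betaDigits β x).drop n) = (Tbeta β)^[n] x := by
  rw [betaDigits_drop, betaValue_betaDigits hβ (Tbeta_iterate_mem_Ico β hx n)]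

end BetaTransformation

section Words

lemma append_lt_append_of_lt {a b c d : List Bool} (h : a < b) (hlen : a.length = b.length) :
    a ++ c < b ++ d := by
  induction a generalizing b with
  | nil => exact absurd (List.length_eq_zero_iff.1 hlen.symm ▸ h) (lt_irrefl _)
  | cons x a ih =>
    obtain _ | ⟨y, b⟩ := b
    · simp at hlen
    simp only [List.length_cons, add_left_inj] at hlen
    rw [List.cons_append, List.cons_append, List.cons_lt_cons_iff]
    rw [List.cons_lt_cons_iff] at h
    exact h.imp_right fun ⟨hxy, hab⟩ ↦ ⟨hxy, ih hab hlen⟩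

lemma le_of_append_le_append {a b c d : List Bool} (h : a ++ c ≤ b ++ d)
    (hlen : a.length = b.length) : a ≤ b :=
  not_lt.1 fun hlt ↦ h.not_gt (append_lt_append_of_lt hlt hlen.symm)

lemma suffix_or_exists_eq_append_of_suffix_append {α : Type*} {v x y : List α}
    (h : v <:+ x ++ y) : v <:+ y ∨ ∃ v', v' ≠ [] ∧ v' <:+ x ∧ v = v' ++ y := by
  obtain h' | ⟨v', rfl⟩ := List.suffix_or_suffix_of_suffix h (List.suffix_append x y)
  · exact .inl h'
  · rcases eq_or_ne v' [] with rfl | hne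
    · exact .inl (by simp)
    · exact .inr ⟨v', hne, List.suffix_append_self_iff.1 h, rfl⟩

lemma exists_eq_take_drop_of_suffix_take {α : Type*} {z : Stream' α} {v : List α} {n : ℕ}
    (h : v <:+ z.take n) : ∃ i, i + v.length = n ∧ v = (z.drop i).take v.length := by
  have hlen := h.length_le
  rw [Stream'.length_take] at hlen
  refine ⟨n - v.length, Nat.sub_add_cancel hlen, ?_⟩
  rw [Stream'.take_drop, Nat.sub_add_cancel hlen]
  simpa using List.suffix_iff_eq_drop.1 h

lemma exists_eq_take_drop_of_infix_take {α : Type*} {z : Stream' α} {v : List α} {n : ℕ}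
    (h : v <:+: z.take n) : ∃ i, i + v.length ≤ n ∧ v = (z.drop i).take v.length := by
  obtain ⟨t, hvt, ht⟩ := List.infix_iff_prefix_suffix.1 h
  obtain ⟨i, hi, htake⟩ := exists_eq_take_drop_of_suffix_take ht
  refine ⟨i, (Nat.add_le_add_left hvt.length_le i).trans hi.le, ?_⟩
  have := List.prefix_iff_eq_take.1 hvt
  rwa [htake, Stream'.take_take, min_eq_right hvt.length_le] at this

variable {m r : ℕ} {S z : Stream' Bool} {x y v w : List Bool}

lemma take_eq_replicate_iff {α : Type*} {z : Stream' α} {c : α} {n : ℕ} :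
    z.take n = List.replicate n c ↔ ∀ i < n, z.get i = c := by
  simp [List.ext_getElem_iff, Stream'.take_get]

lemma runFree_iff :
    RunFree m z ↔ ∀ n, (z.drop n).take (m + 1) ≠ List.replicate (m + 1) true := by
  simp only [RunFree, Ne, take_eq_replicate_iff, Stream'.get_drop, Nat.lt_succ_iff]
  push Not
  simp

/-- The finite words that may occur in a binary sequence without `m + 1` consecutive ones all of
whose tails are lexicographically at least `S`. -/
structure IsAdmissible (m : ℕ) (S : Stream' Bool) (w : List Bool) : Prop where
  not_ones_infix : ¬ List.replicate (m + 1) true <:+: w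
  take_le : ∀ v, v <:+ w → S.take v.length ≤ v

/-- The admissible words that can be concatenated without restriction: they start with `0` and every
nonempty suffix strictly exceeds the prefix of `S` of the same length. -/
structure IsFreelyAdmissible (m : ℕ) (S : Stream' Bool) (w : List Bool) : Prop where
  zero_prefix : [false] <+: w
  not_ones_infix : ¬ List.replicate (m + 1) true <:+: w
  take_lt : ∀ v, v <:+ w → v ≠ [] → S.take v.length < v

lemma IsAdmissible.of_suffix (hw : IsAdmissible m S w) (h : v <:+ w) : IsAdmissible m S v :=
  ⟨fun h' ↦ hw.not_ones_infix (h'.trans h.isInfix), fun u hu ↦ hw.take_le u (hu.trans h)⟩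

lemma IsAdmissible.of_prefix (hw : IsAdmissible m S w) (h : v <+: w) : IsAdmissible m S v := by
  refine ⟨fun h' ↦ hw.not_ones_infix (h'.trans h.isInfix), fun u hu ↦ ?_⟩
  obtain ⟨t, rfl⟩ := h
  have hle := hw.take_le (u ++ t) (List.suffix_append_self_iff.2 hu)
  rw [List.length_append, Stream'.take_add] at hle
  exact le_of_append_le_append hle (by simp)

lemma isAdmissible_take (hz : RunFree m z) (hS : ∀ i k, S.take k ≤ (z.drop i).take k) (n : ℕ) :
    IsAdmissible m S (z.take n) where
  not_ones_infix h := by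
    obtain ⟨i, -, hi⟩ := exists_eq_take_drop_of_infix_take h
    rw [List.length_replicate] at hi
    exact runFree_iff.1 hz i hi.symm
  take_le v hv := by
    obtain ⟨i, -, hi⟩ := exists_eq_take_drop_of_suffix_take hv
    exact (hS i v.length).trans_eq hi.symm

lemma IsFreelyAdmissible.append (hx : IsFreelyAdmissible m S x) (hy : IsFreelyAdmissible m S y) :
    IsFreelyAdmissible m S (x ++ y) where
  zero_prefix := hx.zero_prefix.trans (List.prefix_append x y)
  not_ones_infix h := by
    obtain h | h | ⟨l₁, l₂, hl, h₁, h₂⟩ := List.infix_append_iff.1 h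
    · exact hx.not_ones_infix h
    · exact hy.not_ones_infix h
    · rcases eq_or_ne l₂ [] with rfl | hne
      · exact hx.not_ones_infix (hl ▸ by simpa using h₁.isInfix)
      · have hmem : false ∈ l₂ :=
          (List.prefix_of_prefix_length_le hy.zero_prefix h₂
            (List.length_pos_iff.2 hne)).subset (List.mem_singleton_self _)
        have : false ∈ List.replicate (m + 1) true := hl ▸ List.mem_append_right l₁ hmem
        simp at this
  take_lt v hv hne := by
    obtain hv | ⟨v', hne', hv', rfl⟩ := suffix_or_exists_eq_append_of_suffix_append hv
    · exact hy.take_lt v hv hne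
    · rw [List.length_append, Stream'.take_add]
      exact append_lt_append_of_lt (hx.take_lt v' hv' hne') (by simp)

/-- The periodic sequence `(01^m)^∞`. -/
def zeroOnes (m : ℕ) : Stream' Bool :=
  fun i ↦ decide (i % (m + 1) ≠ 0)

/-- The properties of the periodic sequence `S = s^∞` generated by a β-Lyndon word that drive the
argument when `δ(β) = (1^m 0)^∞`: `S` is its own smallest tail, lies in the corresponding subshift
with a prefix smaller than `01^m`, and contains no factor `(01^m)^r`. -/
structure IsLyndonStream (m r : ℕ) (S : Stream' Bool) : Prop where
  get_zero : S.get 0 = false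
  exists_get_succ : ∃ j < m, S.get (j + 1) = false
  take_le_take_drop : ∀ n k, S.take k ≤ (S.drop n).take k
  runFree : RunFree m S
  take_drop_ne : ∀ n, (S.drop n).take (r * (m + 1)) ≠ (zeroOnes m).take (r * (m + 1))

lemma get_zeroOnes_eq_false {i : ℕ} : (zeroOnes m).get i = false ↔ m + 1 ∣ i := by
  simp [zeroOnes, Stream'.get, Nat.dvd_iff_mod_eq_zero]

lemma runFree_zeroOnes (m : ℕ) : RunFree m (zeroOnes m) := by
  intro i
  have := Nat.mod_lt i m.succ_pos
  refine ⟨(m + 1 - i % (m + 1)) % (m + 1), Nat.lt_succ_iff.1 (Nat.mod_lt _ m.succ_pos), ?_⟩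
  rw [get_zeroOnes_eq_false, Nat.dvd_iff_mod_eq_zero, Nat.add_mod, Nat.mod_mod, Nat.add_mod_mod,
    Nat.add_sub_cancel' this.le, Nat.mod_self]

lemma zeroOnes_take_succ (m : ℕ) :
    (zeroOnes m).take (m + 1) = false :: List.replicate m true := by
  refine List.ext_getElem (by simp) fun i hi _ ↦ ?_
  rw [Stream'.length_take] at hi
  rw [Stream'.take_get]
  cases i with
  | zero => simp [zeroOnes, Stream'.get]
  | succ i => simp [zeroOnes, Stream'.get, Nat.mod_eq_of_lt hi]

lemma zeroOnes_drop (m : ℕ) : (zeroOnes m).drop (m + 1) = zeroOnes m := by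
  ext i
  rw [Stream'.get_drop]
  simp [zeroOnes, Stream'.get]

lemma IsLyndonStream.take_ne_take_drop_zeroOnes (hS : IsLyndonStream m r S) {i k : ℕ} (hk : 0 < k)
    (hik : m + 1 ∣ i → m + 1 ≤ k) : S.take k ≠ ((zeroOnes m).drop i).take k := by
  intro h
  rw [take_eq_take_iff] at h
  obtain ⟨j, hjm, hj⟩ := hS.exists_get_succ
  have hi : m + 1 ∣ i := by
    rw [← get_zeroOnes_eq_false, ← add_zero i, ← Stream'.get_drop, ← h 0 hk, hS.get_zero]
  have hij : m + 1 ∣ i + (j + 1) := by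
    rw [← get_zeroOnes_eq_false, ← Stream'.get_drop, ← h (j + 1) (by have := hik hi; omega), hj]
  have := Nat.le_of_dvd j.succ_pos ((Nat.dvd_add_right hi).1 hij)
  omega

lemma IsLyndonStream.take_le_take_drop_zeroOnes (hS : IsLyndonStream m r S) (i k : ℕ) :
    S.take k ≤ ((zeroOnes m).drop i).take k := by
  refine not_lt.1 fun h ↦ ?_
  obtain ⟨l, -, heq, hzero, hone⟩ := take_lt_take_iff.1 h
  have hl : 0 < l := Nat.pos_of_ne_zero fun h ↦ by simp [h, hS.get_zero] at hone
  refine hS.take_ne_take_drop_zeroOnes hl (fun hi ↦ ?_) heq.symm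
  rw [Stream'.get_drop, get_zeroOnes_eq_false] at hzero
  exact Nat.le_of_dvd hl ((Nat.dvd_add_right hi).1 hzero)

lemma IsLyndonStream.isAdmissible_take_zeroOnes (hS : IsLyndonStream m r S) (n : ℕ) :
    IsAdmissible m S ((zeroOnes m).take n) :=
  isAdmissible_take (runFree_zeroOnes m) hS.take_le_take_drop_zeroOnes n

lemma IsLyndonStream.take_succ_lt (hS : IsLyndonStream m r S) :
    S.take (m + 1) < false :: List.replicate m true := by
  rw [← zeroOnes_take_succ]
  exact lt_of_le_of_ne (by simpa using hS.take_le_take_drop_zeroOnes 0 (m + 1))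
    (by simpa using hS.take_ne_take_drop_zeroOnes (i := 0) m.succ_pos fun _ ↦ le_rfl)

end Words

section Padding

variable {m r : ℕ} {S : Stream' Bool} {v w : List Bool}

lemma IsAdmissible.concat_true (hw : IsAdmissible m S w) (h : ¬ List.replicate m true <:+ w) :
    IsAdmissible m S (w ++ [true]) where
  not_ones_infix h' := by
    obtain h' | h' := List.infix_concat_iff.1 h'
    · rw [List.replicate_succ', List.suffix_append_self_iff] at h'
      exact h h'
    · exact hw.not_ones_infix h'
  take_le v hv := by
    obtain rfl | ⟨t, rfl, ht⟩ := List.suffix_concat_iff.1 hv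
    · simp
    rw [List.length_append, List.length_singleton, Stream'.take_succ']
    obtain hlt | heq := (hw.take_le t ht).lt_or_eq
    · exact (append_lt_append_of_lt hlt (by simp)).le
    · rw [heq]
      cases S.get t.length with
      | true => rfl
      | false => exact (List.append_left_lt (by decide)).le

lemma IsLyndonStream.get_eq_false_of_ones_suffix (hS : IsLyndonStream m r S) {k : ℕ}
    (h : List.replicate m true <:+ w) (hk : S.take k <:+ w) : S.get k = false := by
  obtain h' | h' := List.suffix_or_suffix_of_suffix h hk
  · by_contra hget
    have hones : List.replicate (m + 1) true <:+ S.take (k + 1) := by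
      rw [List.replicate_succ', Stream'.take_succ', eq_true_of_ne_false hget,
        List.suffix_append_self_iff]
      exact h'
    obtain ⟨i, -, hi⟩ := exists_eq_take_drop_of_suffix_take hones
    rw [List.length_replicate] at hi
    exact runFree_iff.1 hS.runFree i hi.symm
  · cases k with
    | zero => exact hS.get_zero
    | succ k =>
      have : false ∈ List.replicate m true :=
        h'.subset (by rw [Stream'.take_succ, ← hS.get_zero]; exact List.mem_cons_self)
      simp at this

lemma IsAdmissible.concat_false (hw : IsAdmissible m S w) (hS : IsLyndonStream m r S)
    (h : List.replicate m true <:+ w) : IsAdmissible m S (w ++ [false]) where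
  not_ones_infix h' := by
    obtain h' | h' := List.infix_concat_iff.1 h'
    · have : false ∈ List.replicate (m + 1) true := by
        rw [List.replicate_succ'] at h' ⊢
        obtain ⟨t, ht⟩ := h'
        rw [← List.append_assoc] at ht
        have := (List.append_inj' ht rfl).2
        simp at this
      simp at this
    · exact hw.not_ones_infix h'
  take_le v hv := by
    obtain rfl | ⟨t, rfl, ht⟩ := List.suffix_concat_iff.1 hv
    · simp
    rw [List.length_append, List.length_singleton, Stream'.take_succ']
    obtain hlt | heq := (hw.take_le t ht).lt_or_eq
    · exact (append_lt_append_of_lt hlt (by simp)).le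
    · rw [hS.get_eq_false_of_ones_suffix h (heq.symm ▸ ht), heq]

lemma IsAdmissible.append_replicate_true (hw : IsAdmissible m S w) {k : ℕ}
    (h : ∀ b < k, ¬ List.replicate m true <:+ w ++ List.replicate b true) :
    IsAdmissible m S (w ++ List.replicate k true) := by
  induction k with
  | zero => simpa
  | succ k ih =>
    rw [List.replicate_succ', ← List.append_assoc]
    exact (ih fun b hb ↦ h b (hb.trans k.lt_succ_self)).concat_true (h k k.lt_succ_self)

lemma IsAdmissible.exists_append_replicate_true (hw : IsAdmissible m S w) :
    ∃ b ≤ m, IsAdmissible m S (w ++ List.replicate b true) ∧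
      List.replicate m true <:+ w ++ List.replicate b true := by
  classical
  have hex : ∃ b, List.replicate m true <:+ w ++ List.replicate b true :=
    ⟨m, List.suffix_append _ _⟩
  exact ⟨Nat.find hex, Nat.find_min' hex (List.suffix_append _ _),
    hw.append_replicate_true fun _ ↦ Nat.find_min hex, Nat.find_spec hex⟩

lemma IsAdmissible.append_block (hw : IsAdmissible m S w) (hS : IsLyndonStream m r S)
    (h : List.replicate m true <:+ w) :
    IsAdmissible m S (w ++ (false :: List.replicate m true)) := by
  rw [List.append_cons]
  refine (hw.concat_false hS h).append_replicate_true fun b hb hsuffix ↦ ?_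
  have : [false] ++ List.replicate b true <:+ List.replicate m true :=
    List.suffix_of_suffix_length_le (by rw [List.append_assoc]; exact List.suffix_append _ _)
      hsuffix (by simpa [Nat.add_comm] using hb)
  have := this.subset (List.mem_append_left _ (List.mem_singleton_self false))
  simp at this

lemma IsAdmissible.append_take_zeroOnes (hw : IsAdmissible m S w) (hS : IsLyndonStream m r S)
    (h : List.replicate m true <:+ w) (n : ℕ) :
    IsAdmissible m S (w ++ (zeroOnes m).take (n * (m + 1))) := by
  induction n generalizing w with
  | zero => simpa [Stream'.take_zero]
  | succ n ih =>
    rw [Nat.succ_mul, Nat.add_comm, Stream'.take_add, zeroOnes_drop, zeroOnes_take_succ,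
      ← List.append_assoc]
    refine ih (hw.append_block hS h) ?_
    rw [List.append_cons]
    exact List.suffix_append _ _

lemma IsAdmissible.cons_true (hw : IsAdmissible m S w) (hS : IsLyndonStream m r S)
    (h : ¬ List.replicate m true <+: w) : IsAdmissible m S (true :: w) where
  not_ones_infix h' := by
    obtain h' | h' := List.infix_cons_iff.1 h'
    · exact h (by simpa [List.replicate_succ] using h')
    · exact hw.not_ones_infix h'
  take_le v hv := by
    obtain rfl | hv := List.suffix_cons_iff.1 hv
    · rw [List.length_cons, Stream'.take_succ]
      have hhead : S.head = false := hS.get_zero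
      exact (List.cons_lt_cons_iff.2 (.inl (hhead ▸ by decide))).le
    · exact hw.take_le v hv

lemma IsAdmissible.cons_false (hw : IsAdmissible m S w) (hS : IsLyndonStream m r S)
    (h : List.replicate m true <+: w) : IsAdmissible m S (false :: w) where
  not_ones_infix h' := by
    obtain h' | h' := List.infix_cons_iff.1 h'
    · simp [List.replicate_succ] at h'
    · exact hw.not_ones_infix h'
  take_le v hv := by
    obtain rfl | hv := List.suffix_cons_iff.1 hv
    · obtain ⟨t, rfl⟩ := h
      rw [← List.cons_append, List.length_append, Stream'.take_add]
      exact (append_lt_append_of_lt (by simpa using hS.take_succ_lt) (by simp)).le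
    · exact hw.take_le v hv

lemma IsAdmissible.exists_replicate_true_append (hw : IsAdmissible m S w)
    (hS : IsLyndonStream m r S) :
    ∃ a ≤ m, IsAdmissible m S (List.replicate a true ++ w) ∧
      List.replicate m true <+: List.replicate a true ++ w := by
  classical
  have hex : ∃ a, List.replicate m true <+: List.replicate a true ++ w :=
    ⟨m, List.prefix_append _ _⟩
  refine ⟨Nat.find hex, Nat.find_min' hex (List.prefix_append _ _), ?_, Nat.find_spec hex⟩
  have hadm : ∀ a ≤ Nat.find hex, IsAdmissible m S (List.replicate a true ++ w) := by
    intro a ha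
    induction a with
    | zero => simpa
    | succ a ih => exact (ih (a.le_succ.trans ha)).cons_true hS (Nat.find_min hex ha)
  exact hadm _ le_rfl

lemma IsAdmissible.take_lt_of_take_zeroOnes_suffix (hw : IsAdmissible m S w)
    (hS : IsLyndonStream m r S) (h : (zeroOnes m).take (r * (m + 1)) <:+ w) (hv : v <:+ w)
    (hne : v ≠ []) : S.take v.length < v := by
  refine lt_of_le_of_ne (hw.take_le v hv) fun heq ↦ ?_
  obtain h' | h' := List.suffix_or_suffix_of_suffix h hv
  · rw [← heq] at h'
    obtain ⟨i, -, hi⟩ := exists_eq_take_drop_of_suffix_take h'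
    exact hS.take_drop_ne i (by simpa using hi.symm)
  · obtain ⟨i, hi, hvi⟩ := exists_eq_take_drop_of_suffix_take h'
    have hpos := List.length_pos_iff.2 hne
    refine hS.take_ne_take_drop_zeroOnes hpos (fun hdvd ↦ ?_) (heq.trans hvi)
    exact Nat.le_of_dvd hpos ((Nat.dvd_add_right hdvd).1 (hi ▸ Nat.dvd_mul_left _ _))

/-- The word `0 1^a w 1^b (01^m)^r`; with suitable `a, b ≤ m` it makes an admissible word `w` freely
admissible. -/
def pad (m r a b : ℕ) (w : List Bool) : List Bool :=
  false :: (List.replicate a true ++ (w ++ List.replicate b true)) ++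
    (zeroOnes m).take (r * (m + 1))

lemma length_pad (m r a b : ℕ) (w : List Bool) :
    (pad m r a b w).length = w.length + (1 + a + b + r * (m + 1)) := by
  simp only [pad, List.length_append, List.length_cons, List.length_replicate, Stream'.length_take]
  ring

lemma IsAdmissible.exists_isFreelyAdmissible_pad (hw : IsAdmissible m S w)
    (hS : IsLyndonStream m r S) :
    ∃ a ≤ m, ∃ b ≤ m, IsFreelyAdmissible m S (pad m r a b w) := by
  obtain ⟨b, hb, hwb, hones⟩ := hw.exists_append_replicate_true
  obtain ⟨a, ha, hawb, hones'⟩ := hwb.exists_replicate_true_append hS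
  have hpad : IsAdmissible m S (pad m r a b w) :=
    (hawb.cons_false hS hones').append_take_zeroOnes hS
      (hones.trans ((List.suffix_append _ _).trans (List.suffix_cons _ _))) r
  exact ⟨a, ha, b, hb, ⟨_, rfl⟩, hpad.not_ones_infix, fun v hv hne ↦
    hpad.take_lt_of_take_zeroOnes_suffix hS (List.suffix_append _ _) hv hne⟩

end Padding

section Counting

variable {m r H n : ℕ} {S : Stream' Bool} {μ w : List Bool}

open Classical in
/-- The admissible words of length `n` that avoid the prefix of `S` of length `H`. -/
noncomputable def avoidingWords (m : ℕ) (S : Stream' Bool) (H n : ℕ) : Finset (List Bool) :=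
  ((Finset.univ : Finset (Fin n → Bool)).image List.ofFn).filter fun w ↦
    IsAdmissible m S w ∧ ¬ S.take H <:+: w

lemma mem_avoidingWords :
    w ∈ avoidingWords m S H n ↔ w.length = n ∧ IsAdmissible m S w ∧ ¬ S.take H <:+: w := by
  simp only [avoidingWords, Finset.mem_filter, Finset.mem_image, Finset.mem_univ, true_and]
  refine and_congr_left fun _ ↦ ⟨?_, ?_⟩
  · rintro ⟨f, rfl⟩
    exact List.length_ofFn
  · rintro rfl
    exact ⟨w.get, List.ofFn_get w⟩

lemma card_avoidingWords_le : (avoidingWords m S H n).card ≤ 2 ^ n := by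
  classical
  calc (avoidingWords m S H n).card
      ≤ ((Finset.univ : Finset (Fin n → Bool)).image List.ofFn).card := Finset.card_filter_le _ _
    _ ≤ (Finset.univ : Finset (Fin n → Bool)).card := Finset.card_image_le
    _ = 2 ^ n := by simp

lemma IsLyndonStream.avoidingWords_nonempty (hS : IsLyndonStream m r S) (hH : m + 1 ≤ H) (n : ℕ) :
    (avoidingWords m S H n).Nonempty := by
  refine ⟨(zeroOnes m).take n, mem_avoidingWords.2
    ⟨Stream'.length_take _ _, hS.isAdmissible_take_zeroOnes n, fun h ↦ ?_⟩⟩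
  obtain ⟨i, -, hi⟩ := exists_eq_take_drop_of_infix_take h
  rw [Stream'.length_take] at hi
  exact hS.take_ne_take_drop_zeroOnes (m.succ_pos.trans_le hH) (fun _ ↦ hH) hi

/-- The word `w` with the marker `μ` inserted at position `j`, both halves of `w` being padded with
runs of ones of the lengths prescribed by `q`. -/
def insertMarker (m r : ℕ) (μ : List Bool) (q : Fin 4 → Fin (m + 1)) (j : ℕ) (w : List Bool) :
    List Bool :=
  pad m r (q 0) (q 1) (w.take j) ++ μ ++ pad m r (q 2) (q 3) (w.drop j)

lemma length_insertMarker (m r : ℕ) (μ : List Bool) (q : Fin 4 → Fin (m + 1)) (j : ℕ)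
    (w : List Bool) : (insertMarker m r μ q j w).length =
      w.length + (μ.length + 2 * (1 + r * (m + 1)) + (q 0 + q 1 + q 2 + q 3)) := by
  have hw : (w.take j).length + (w.drop j).length = w.length := by
    rw [← List.length_append, List.take_append_drop]
  simp only [insertMarker, List.length_append, length_pad]
  linarith

lemma IsAdmissible.exists_isFreelyAdmissible_insertMarker (hw : IsAdmissible m S w)
    (hS : IsLyndonStream m r S) (hμ : IsFreelyAdmissible m S μ) (j : ℕ) :
    ∃ q, IsFreelyAdmissible m S (insertMarker m r μ q j w) := by
  obtain ⟨a, ha, b, hb, hfree⟩ :=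
    (hw.of_prefix (List.take_prefix j w)).exists_isFreelyAdmissible_pad hS
  obtain ⟨c, hc, d, hd, hfree'⟩ :=
    (hw.of_suffix (List.drop_suffix j w)).exists_isFreelyAdmissible_pad hS
  exact ⟨![⟨a, by omega⟩, ⟨b, by omega⟩, ⟨c, by omega⟩, ⟨d, by omega⟩],
    (hfree.append hμ).append hfree'⟩

lemma infix_of_insertMarker_eq {q : Fin 4 → Fin (m + 1)} {j j' : ℕ} {w w' : List Bool}
    (h : insertMarker m r μ q j w = insertMarker m r μ q j' w')
    (hj : j + (q 1 + r * (m + 1) + μ.length) ≤ j') (hj' : j' ≤ w'.length) : μ <:+: w' := by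
  simp only [insertMarker, pad, List.cons_append, List.append_assoc, List.cons.injEq, true_and,
    List.append_cancel_left_eq] at h
  have hprefix : w.take j ++ (List.replicate (q 1) true ++
      ((zeroOnes m).take (r * (m + 1)) ++ μ)) <+: w'.take j' := by
    refine List.prefix_of_prefix_length_le ⟨?_, .trans ?_ h⟩ (List.prefix_append _ _) ?_
    rotate_left
    · simp only [List.append_assoc]
      rfl
    · simp only [List.length_append, List.length_take, List.length_replicate, Stream'.length_take]
      omega
  exact (((List.suffix_append _ _).trans <| (List.suffix_append _ _).trans <|
    List.suffix_append _ _).isInfix.trans hprefix.isInfix).trans (List.take_prefix j' w').isInfix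

lemma insertMarker_injective {q : Fin 4 → Fin (m + 1)} {j : ℕ} {w w' : List Bool}
    (h : insertMarker m r μ q j w = insertMarker m r μ q j w') (hlen : w.length = w'.length) :
    w = w' := by
  have htake : (w.take j).length = (w'.take j).length := by simp [hlen]
  simp only [insertMarker, pad, List.cons_append, List.append_assoc, List.cons.injEq, true_and,
    List.append_cancel_left_eq] at h
  obtain ⟨h₁, h₂⟩ := List.append_inj h htake
  simp only [List.append_cancel_left_eq, List.cons.injEq, true_and,
    List.append_cancel_right_eq] at h₂
  rw [← List.take_append_drop j w, h₁, h₂, List.take_append_drop]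

lemma insertMarker_injOn (hμ : S.take H <:+: μ) (q : Fin 4 → Fin (m + 1)) {M k : ℕ}
    (hM : q 1 + r * (m + 1) + μ.length ≤ M) :
    InjOn (fun p : List Bool × ℕ ↦ insertMarker m r μ q (p.2 * M) p.1)
      (avoidingWords m S H (k * M) ×ˢ Finset.range k : Finset (List Bool × ℕ)) := by
  have hlt : ∀ {w w' : List Bool} {i i' : ℕ}, w' ∈ avoidingWords m S H (k * M) → i' < k →
      insertMarker m r μ q (i * M) w = insertMarker m r μ q (i' * M) w' → ¬ i < i' := by
    intro w w' i i' hw' hi' heq hii'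
    obtain ⟨hlen, -, havoid⟩ := mem_avoidingWords.1 hw'
    have hstep : (i + 1) * M ≤ i' * M := Nat.mul_le_mul_right M hii'
    refine havoid (hμ.trans (infix_of_insertMarker_eq heq ?_ ?_))
    · linarith
    · exact hlen ▸ Nat.mul_le_mul_right M hi'.le
  rintro ⟨w, i⟩ h ⟨w', i'⟩ h' heq
  simp only [Finset.coe_product, mem_prod, Finset.mem_coe, Finset.mem_range] at h h' heq
  obtain rfl : i = i' :=
    le_antisymm (not_lt.1 (hlt h.1 h.2 heq.symm)) (not_lt.1 (hlt h'.1 h'.2 heq))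
  rw [insertMarker_injective heq
    ((mem_avoidingWords.1 h.1).1.trans (mem_avoidingWords.1 h'.1).1.symm)]

/-- The freely admissible words of length `L` containing the prefix of `S` of length `H`. -/
structure IsMarkedBlock (m : ℕ) (S : Stream' Bool) (H L : ℕ) (w : List Bool) : Prop
    extends IsFreelyAdmissible m S w where
  length_eq : w.length = L
  take_infix : S.take H <:+: w

lemma IsLyndonStream.exists_marker (hS : IsLyndonStream m r S) (H : ℕ) :
    ∃ μ, IsFreelyAdmissible m S μ ∧ S.take H <:+: μ := by
  obtain ⟨a, -, b, -, hfree⟩ :=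
    (isAdmissible_take hS.runFree hS.take_le_take_drop H).exists_isFreelyAdmissible_pad hS
  refine ⟨_, hfree, (List.IsInfix.trans ?_ (List.prefix_append _ _).isInfix)⟩
  exact ⟨false :: List.replicate a true, List.replicate b true, by simp⟩

lemma IsLyndonStream.exists_fiber (hS : IsLyndonStream m r S) (hμ : IsFreelyAdmissible m S μ)
    (hH : m + 1 ≤ H) (n C M : ℕ) : ∃ q : Fin 4 → Fin (m + 1),
      ∃ P ⊆ avoidingWords m S H n ×ˢ Finset.range ((m + 1) ^ 4 * C + 1),
        (∀ p ∈ P, IsFreelyAdmissible m S (insertMarker m r μ q (p.2 * M) p.1)) ∧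
          C * (avoidingWords m S H n).card < P.card := by
  have hex (p : List Bool × ℕ) : ∃ q, p.1 ∈ avoidingWords m S H n →
      IsFreelyAdmissible m S (insertMarker m r μ q (p.2 * M) p.1) := by
    by_cases hp : p.1 ∈ avoidingWords m S H n
    · exact ((mem_avoidingWords.1 hp).2.1.exists_isFreelyAdmissible_insertMarker hS hμ _).imp
        fun _ h _ ↦ h
    · exact ⟨0, fun h ↦ absurd h hp⟩
  choose q hq using hex
  obtain ⟨q₀, -, hcard⟩ := Finset.exists_lt_card_fiber_of_mul_lt_card_of_maps_to
    (s := avoidingWords m S H n ×ˢ Finset.range ((m + 1) ^ 4 * C + 1)) (t := Finset.univ) (f := q)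
    (n := C * (avoidingWords m S H n).card) (fun _ _ ↦ Finset.mem_univ _) (by
      have := (hS.avoidingWords_nonempty hH n).card_pos
      simp only [Finset.card_univ, Fintype.card_fun, Fintype.card_fin, Finset.card_product,
        Finset.card_range]
      linarith)
  refine ⟨q₀, _, Finset.filter_subset _ _, fun p hp ↦ ?_, hcard⟩
  obtain ⟨hmem, rfl⟩ := Finset.mem_filter.1 hp
  exact hq p (Finset.mem_product.1 hmem).1

/- Inserting one marker into an avoiding word costs a bounded number `M` of digits, hence at most a
factor `2 ^ M` in the comparison of growth rates, while the number of insertion points is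
unbounded. -/
theorem IsLyndonStream.exists_card_avoidingWords_pow_lt (hS : IsLyndonStream m r S)
    (hH : m + 1 ≤ H) : ∃ n > 0, ∃ L, ∃ F : Finset (List Bool),
      (∀ w ∈ F, IsMarkedBlock m S H L w) ∧ (avoidingWords m S H n).card ^ L < F.card ^ n := by
  classical
  obtain ⟨μ, hμ, hHμ⟩ := hS.exists_marker H
  set M := μ.length + 2 * (1 + r * (m + 1)) + 4 * m
  set k := (m + 1) ^ 4 * 2 ^ M + 1
  set n := k * M
  obtain ⟨q, P, hP, hfree, hcard⟩ := hS.exists_fiber hμ hH n (2 ^ M) M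
  set cost := μ.length + 2 * (1 + r * (m + 1)) + (q 0 + q 1 + q 2 + q 3 : ℕ)
  have hcost : cost ≤ M := by omega
  have hn : 0 < n := Nat.mul_pos (Nat.succ_pos _) (by omega)
  refine ⟨n, hn, n + cost, P.image fun p ↦ insertMarker m r μ q (p.2 * M) p.1,
    Finset.forall_mem_image.2 fun p hp ↦ ?_, ?_⟩
  · refine ⟨hfree p hp, ?_, hHμ.trans ⟨_, _, rfl⟩⟩
    rw [length_insertMarker, (mem_avoidingWords.1 (Finset.mem_product.1 (hP hp)).1).1]
  rw [Finset.card_image_of_injOn ((insertMarker_injOn hHμ q (by omega)).mono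
    (Finset.coe_subset.2 hP))]
  set A := (avoidingWords m S H n).card
  have hA : 1 ≤ A := (hS.avoidingWords_nonempty hH n).card_pos
  calc A ^ (n + cost) ≤ A ^ (n + M) := Nat.pow_le_pow_right hA (by omega)
    _ = A ^ M * A ^ n := by rw [pow_add, mul_comm]
    _ ≤ (2 ^ n) ^ M * A ^ n := by gcongr; exact card_avoidingWords_le
    _ = (2 ^ M * A) ^ n := by rw [mul_pow, ← pow_mul, ← pow_mul, mul_comm n]
    _ < P.card ^ n := Nat.pow_lt_pow_left hcard hn.ne'

end Counting

section LowerBound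

variable {β : ℝ} {m r H L : ℕ} {S : Stream' Bool} {a : ℕ → List Bool}

/-- The infinite concatenation `a 0 ++ a 1 ++ ⋯` of words of length `L`. -/
def concatBlocks (L : ℕ) (a : ℕ → List Bool) : Stream' Bool :=
  fun i ↦ (a (i / L)).getD (i % L) false

lemma take_drop_concatBlocks (ha : ∀ i, (a i).length = L) (q : ℕ) {l k : ℕ} (hlk : l + k = L) :
    ((concatBlocks L a).drop (q * L + l)).take k = (a q).drop l := by
  refine List.ext_getElem (by simp [ha, ← hlk]) fun i hi _ ↦ ?_
  rw [Stream'.length_take] at hi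
  have hlt : l + i < L := by omega
  have hdiv : (q * L + (l + i)) / L = q := by
    rw [Nat.mul_comm, Nat.mul_add_div (by omega), Nat.div_eq_of_lt hlt, add_zero]
  rw [Stream'.take_get, Stream'.get_drop, List.getElem_drop, add_assoc]
  simp only [concatBlocks, Stream'.get, hdiv, Nat.mul_add_mod_self_right, Nat.mod_eq_of_lt hlt]
  exact List.getD_eq_getElem _ _ (by rwa [ha])

lemma take_drop_mul_concatBlocks (ha : ∀ i, (a i).length = L) (q : ℕ) :
    ((concatBlocks L a).drop (q * L)).take L = a q := by
  simpa using take_drop_concatBlocks ha q (zero_add L)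

lemma get_concatBlocks_mul (ha : ∀ i, IsMarkedBlock m S H L (a i)) (q : ℕ) :
    (concatBlocks L a).get (q * L) = false := by
  have htake := take_drop_mul_concatBlocks (fun i ↦ (ha i).length_eq) q
  obtain ⟨t, ht⟩ := (ha q).zero_prefix
  have hL : 0 < L := by simp [← (ha q).length_eq, ← ht]
  have := congrArg (·[0]?) htake
  simpa [← ht, Stream'.getElem?_take hL] using this

lemma exists_take_lt_take_drop_concatBlocks (ha : ∀ i, IsMarkedBlock m S H L (a i)) (hL : 0 < L)
    (n : ℕ) : ∃ k, S.take k < ((concatBlocks L a).drop n).take k := by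
  have hlt := Nat.mod_lt n hL
  have hlen := (ha (n / L)).length_eq
  have htake := take_drop_concatBlocks (fun i ↦ (ha i).length_eq) (n / L)
    (Nat.add_sub_cancel' hlt.le)
  rw [Nat.div_add_mod'] at htake
  have hdrop : ((a (n / L)).drop (n % L)).length = L - n % L := by rw [List.length_drop, hlen]
  refine ⟨L - n % L, ?_⟩
  rw [htake, ← hdrop]
  exact (ha _).take_lt _ (List.drop_suffix _ _) (List.ne_nil_of_length_pos (by omega))

lemma runFree_concatBlocks (ha : ∀ i, IsMarkedBlock m S H L (a i)) (hL : 0 < L) :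
    RunFree m (concatBlocks L a) := by
  refine runFree_iff.2 fun n hones ↦ ?_
  have hn := Nat.div_add_mod' n L
  have hlt := Nat.mod_lt n hL
  by_cases hm : n % L + (m + 1) ≤ L
  · refine (ha (n / L)).not_ones_infix ((List.IsPrefix.isInfix ?_).trans
      (List.drop_suffix (n % L) _).isInfix)
    rw [← take_drop_concatBlocks (fun i ↦ (ha i).length_eq) (n / L) (Nat.add_sub_cancel' hlt.le),
      hn, ← hones]
    exact (Stream'.take_prefix _ _ _).2 (Nat.le_sub_of_add_le' hm)
  · have hnext : n + (L - n % L) = (n / L + 1) * L := by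
      rw [add_one_mul]
      omega
    have htrue := take_eq_replicate_iff.1 hones (L - n % L) (by omega)
    rw [Stream'.get_drop, hnext, get_concatBlocks_mul ha] at htrue
    exact Bool.false_ne_true htrue

/- The marker in the block following position `n` keeps the tail at `n` away from `1`. -/
lemma IsLyndonStream.betaValue_drop_concatBlocks_le (hS : IsLyndonStream m r S) (hβ : 1 < β)
    (hsum : ∑ i ∈ Finset.range (m + 1), 1 / β ^ (i + 1) = 1) (hH : m + 1 ≤ H)
    (ha : ∀ i, IsMarkedBlock m S H L (a i)) (hL : 0 < L) (n : ℕ) :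
    betaValue β ((concatBlocks L a).drop n) ≤ 1 - 1 / β ^ (2 * L + m + 2) := by
  have hlt := Nat.mod_lt n hL
  have htake := take_drop_mul_concatBlocks (fun i ↦ (ha i).length_eq) (n / L + 1)
  obtain ⟨i, hi, hiS⟩ :=
    exists_eq_take_drop_of_infix_take (htake.symm ▸ (ha (n / L + 1)).take_infix)
  rw [Stream'.length_take] at hi hiS
  obtain ⟨j, hjm, hj⟩ := hS.exists_get_succ
  have hget (k : ℕ) (hk : k < H) :
      ((concatBlocks L a).drop n).get (L - n % L + i + k) = S.get k := by
    rw [take_eq_take_iff.1 hiS k hk, Stream'.get_drop, Stream'.get_drop, Stream'.get_drop]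
    congr 1
    have := Nat.div_add_mod' n L
    rw [add_one_mul]
    omega
  have hfirst : ((concatBlocks L a).drop n).get (L - n % L + i) = false :=
    (hget 0 (by omega)).trans hS.get_zero
  have hsecond : ((concatBlocks L a).drop n).get (L - n % L + i + 1 + j) = false := by
    rw [add_assoc _ 1 j, add_comm 1 j, hget (j + 1) (by omega), hj]
  have hle := ((runFree_concatBlocks ha hL).drop n).betaValue_le_one_sub hβ hsum hfirst hjm hsecond
  have hpow : 1 / β ^ (2 * L + m + 2) ≤ 1 / β ^ (L - n % L + i + m + 2) := by
    gcongr
    · exact hβ.le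
    · omega
  linarith

lemma IsLyndonStream.betaValue_concatBlocks_mem_Kset (hS : IsLyndonStream m r S) (hβ : 1 < β)
    (hsum : ∑ i ∈ Finset.range (m + 1), 1 / β ^ (i + 1) = 1) (hH : m + 1 ≤ H)
    (ha : ∀ i, IsMarkedBlock m S H L (a i)) (hL : 0 < L) :
    betaValue β (concatBlocks L a) ∈ Kset β (betaValue β S) := by
  refine betaValue_mem_Kset hβ (fun n ↦ ?_) fun n ↦ ?_
  · exact (hS.betaValue_drop_concatBlocks_le hβ hsum hH ha hL n).trans_lt
      (sub_lt_self _ (by positivity))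
  · obtain ⟨k, hk⟩ := exists_take_lt_take_drop_concatBlocks ha hL n
    exact betaValue_le_of_take_lt hβ hk fun i ↦ (hS.runFree.drop i).betaValue_le_one hβ hsum

lemma IsLyndonStream.le_dimH_Kset (hS : IsLyndonStream m r S) (hβ : 1 < β)
    (hsum : ∑ i ∈ Finset.range (m + 1), 1 / β ^ (i + 1) = 1) (hH : m + 1 ≤ H)
    {F : Finset (List Bool)} (hF : ∀ w ∈ F, IsMarkedBlock m S H L w) (hL : 0 < L) :
    ENNReal.ofReal (Real.logb (β ^ L) F.card) ≤ dimH (Kset β (betaValue β S)) := by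
  let g (a : ℕ → F) : ℝ := betaValue β (concatBlocks L fun i ↦ a i)
  have hblock (a : ℕ → F) (i : ℕ) : IsMarkedBlock m S H L (a i : List Bool) := hF _ (a i).2
  have hgap (a : ℕ → F) := hS.betaValue_drop_concatBlocks_le hβ hsum hH (hblock a) hL
  have hsep (x y : ℕ → F) (hxy : x ≠ y) : 1 / β ^ (2 * L + m + 2) /
      (β ^ L) ^ (PiNat.firstDiff x y + 1) ≤ dist (g x) (g y) := by
    rw [← pow_mul]
    refine div_pow_le_abs_betaValue_sub hβ (by positivity) (fun heq ↦ ?_) (hgap x) (hgap y)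
    have htake (a : ℕ → F) := take_drop_mul_concatBlocks (fun i ↦ (hblock a i).length_eq)
      (PiNat.firstDiff x y)
    have hdiff := PiNat.apply_firstDiff_ne hxy
    refine hdiff (Subtype.ext ?_)
    rw [mul_comm, Nat.succ_mul, Stream'.take_add, Stream'.take_add] at heq
    simpa using (htake x).symm.trans ((List.append_inj heq (by simp)).2.trans (htake y))
  have hdim := le_dimH_range_of_separated (one_lt_pow₀ hβ hL.ne') (by positivity) g hsep
  rw [Fintype.card_coe] at hdim
  exact hdim.trans (dimH_mono (range_subset_iff.2 fun a ↦
    hS.betaValue_concatBlocks_mem_Kset hβ hsum hH (hblock a) hL))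

end LowerBound

section UpperBound

variable {β x t : ℝ} {m r H n : ℕ} {S y z : Stream' Bool}

lemma take_mul_eq_take_mul {k : ℕ}
    (h : ∀ j < k, (y.drop (j * n)).take n = (z.drop (j * n)).take n) :
    y.take (k * n) = z.take (k * n) := by
  induction k with
  | zero => simp [Stream'.take_zero]
  | succ k ih =>
    rw [Nat.succ_mul, Stream'.take_add, Stream'.take_add,
      ih fun j hj ↦ h j (hj.trans k.lt_succ_self), h k k.lt_succ_self]

lemma runFree_betaDigits (hβ : β ∈ Ioo (1 : ℝ) 2)
    (hsum : ∑ i ∈ Finset.range (m + 1), 1 / β ^ (i + 1) = 1) (hx : x ∈ Ico (0 : ℝ) 1) :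
    RunFree m (betaDigits β x) := by
  refine runFree_iff.2 fun n hones ↦ ?_
  have hdigits := take_eq_replicate_iff.1 hones
  have hpow : 0 < β ^ (m + 1) := pow_pos (one_pos.trans hβ.1) _
  have hvalue : 1 ≤ betaValue β ((betaDigits β x).drop n) := by
    rw [betaValue_eq_sum_add hβ.1 _ (m + 1), ← hsum]
    refine (Finset.sum_le_sum fun i hi ↦ ?_).trans
      (le_add_of_nonneg_right (div_nonneg (betaValue_nonneg hβ.1 _) hpow.le))
    rw [hdigits i (Finset.mem_range.1 hi), Bool.toNat_true, Nat.cast_one]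
  rw [betaValue_betaDigits_drop hβ hx] at hvalue
  exact (Tbeta_iterate_mem_Ico β hx n).2.not_ge hvalue

lemma IsLyndonStream.take_drop_betaDigits_mem_avoidingWords (hS : IsLyndonStream m r S)
    (hβ : β ∈ Ioo (1 : ℝ) 2) (hsum : ∑ i ∈ Finset.range (m + 1), 1 / β ^ (i + 1) = 1)
    (hH : betaValue β S + 1 / β ^ H < t) (hx : x ∈ Kset β t) (i n : ℕ) :
    ((betaDigits β x).drop i).take n ∈ avoidingWords m S H n := by
  have hle_one (j : ℕ) : betaValue β ((betaDigits β x).drop j) ≤ 1 :=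
    (betaValue_betaDigits_drop hβ hx.1 j).trans_le (Tbeta_iterate_mem_Ico β hx.1 j).2.le
  have hlt (j : ℕ) : betaValue β S + 1 / β ^ H < betaValue β ((betaDigits β x).drop j) :=
    (betaValue_betaDigits_drop hβ hx.1 j).symm ▸ hH.trans_le (hx.2 j)
  have hpos : 0 < 1 / β ^ H := one_div_pos.2 (pow_pos (one_pos.trans hβ.1) H)
  refine mem_avoidingWords.2 ⟨Stream'.length_take _ _,
    isAdmissible_take ((runFree_betaDigits hβ hsum hx.1).drop i) (fun j k ↦ ?_) n, fun h ↦ ?_⟩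
  · rw [Stream'.drop_drop]
    refine not_lt.1 fun hlex ↦ ?_
    have := betaValue_le_of_take_lt hβ.1 hlex fun l ↦ by simpa using hle_one _
    linarith [hlt (i + j)]
  · obtain ⟨j, -, hj⟩ := exists_eq_take_drop_of_infix_take h
    rw [Stream'.length_take, Stream'.drop_drop] at hj
    have := abs_betaValue_sub_le_of_take_eq hβ.1 hj
      ((hS.runFree.drop H).betaValue_le_one hβ.1 hsum) (by simpa using hle_one _)
    linarith [hlt (i + j),
      le_abs_self (betaValue β ((betaDigits β x).drop (i + j)) - betaValue β S)]

lemma abs_sub_le_of_take_betaDigits_eq (hβ : β ∈ Ioo (1 : ℝ) 2) {x' : ℝ} (hx : x ∈ Ico (0 : ℝ) 1)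
    (hx' : x' ∈ Ico (0 : ℝ) 1) (h : (betaDigits β x).take n = (betaDigits β x').take n) :
    |x - x'| ≤ 1 / β ^ n := by
  have hle_one {u : ℝ} (hu : u ∈ Ico (0 : ℝ) 1) : betaValue β ((betaDigits β u).drop n) ≤ 1 :=
    (betaValue_betaDigits_drop hβ hu n).trans_le (Tbeta_iterate_mem_Ico β hu n).2.le
  simpa only [betaValue_betaDigits hβ hx, betaValue_betaDigits hβ hx'] using
    abs_betaValue_sub_le_of_take_eq hβ.1 h.symm (hle_one hx') (hle_one hx)

lemma IsLyndonStream.dimH_Kset_le (hS : IsLyndonStream m r S) (hβ : β ∈ Ioo (1 : ℝ) 2)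
    (hsum : ∑ i ∈ Finset.range (m + 1), 1 / β ^ (i + 1) = 1) (hmH : m + 1 ≤ H)
    (hH : betaValue β S + 1 / β ^ H < t) (hn : 0 < n) :
    dimH (Kset β t) ≤ ENNReal.ofReal (Real.logb (β ^ n) (avoidingWords m S H n).card) := by
  have : Nonempty (avoidingWords m S H n) := (hS.avoidingWords_nonempty hmH n).to_subtype
  let cyl (k : ℕ) (v : Fin k → avoidingWords m S H n) : Set ℝ :=
    {x ∈ Kset β t | ∀ j : Fin k, ((betaDigits β x).drop (j * n)).take n = v j}
  have hdiam (k : ℕ) (v) : Metric.ediam (cyl k v) ≤ ENNReal.ofReal (1 / (β ^ n) ^ k) := by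
    refine Metric.ediam_le fun x hx x' hx' ↦ ?_
    rw [edist_dist, ← pow_mul, mul_comm n k]
    refine ENNReal.ofReal_le_ofReal (abs_sub_le_of_take_betaDigits_eq hβ hx.1.1 hx'.1.1 ?_)
    exact take_mul_eq_take_mul fun j hj ↦ (hx.2 ⟨j, hj⟩).trans (hx'.2 ⟨j, hj⟩).symm
  have hcover (k : ℕ) : Kset β t ⊆ ⋃ v, cyl k v := fun x hx ↦ mem_iUnion.2
    ⟨fun j ↦ ⟨_, hS.take_drop_betaDigits_mem_avoidingWords hβ hsum hH hx (j * n) n⟩,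
      hx, fun _ ↦ rfl⟩
  simpa using dimH_le_of_cover (one_lt_pow₀ hβ.1 hn.ne') cyl hdiam hcover

end UpperBound

section StrictMonotonicity

variable {β t : ℝ} {m r : ℕ} {S : Stream' Bool}

lemma logb_pow_lt_logb_pow (hβ : 1 < β) {n L : ℕ} (hn : 0 < n) (hL : 0 < L) {a b : ℝ} (ha : 0 < a)
    (h : a ^ L < b ^ n) : Real.logb (β ^ n) a < Real.logb (β ^ L) b := by
  have hlog := Real.log_lt_log (pow_pos ha L) h
  have hlogβ := Real.log_pos hβ
  rw [Real.log_pow, Real.log_pow] at hlog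
  rw [Real.logb, Real.logb, Real.log_pow, Real.log_pow, div_lt_div_iff₀ (by positivity)
    (by positivity)]
  nlinarith

theorem IsLyndonStream.dimH_Kset_lt (hS : IsLyndonStream m r S) (hβ : β ∈ Ioo (1 : ℝ) 2)
    (hsum : ∑ i ∈ Finset.range (m + 1), 1 / β ^ (i + 1) = 1) (ht : betaValue β S < t) :
    dimH (Kset β t) < dimH (Kset β (betaValue β S)) := by
  have hlim : Tendsto (fun H : ℕ ↦ betaValue β S + 1 / β ^ H) atTop (nhds (betaValue β S + 0)) :=
    tendsto_const_nhds.add (tendsto_const_nhds.div_atTop (tendsto_pow_atTop_atTop_of_one_lt hβ.1))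
  rw [add_zero] at hlim
  obtain ⟨H, hHt, hH⟩ := ((hlim.eventually_lt_const ht).and (eventually_ge_atTop (m + 1))).exists
  obtain ⟨n, hn, L, F, hF, hcard⟩ := hS.exists_card_avoidingWords_pow_lt hH
  have hW : 0 < (avoidingWords m S H n).card := (hS.avoidingWords_nonempty hH n).card_pos
  have hFcard : 1 < F.card := by
    by_contra! hle
    exact hcard.not_ge ((pow_le_one₀ (Nat.zero_le _) hle).trans (Nat.one_le_pow _ _ hW))
  obtain ⟨w, hw⟩ := Finset.card_pos.1 (one_pos.trans hFcard)
  have hL : 0 < L := (hF w hw).length_eq ▸ (hF w hw).zero_prefix.length_le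
  calc dimH (Kset β t)
      ≤ ENNReal.ofReal (Real.logb (β ^ n) (avoidingWords m S H n).card) :=
        hS.dimH_Kset_le hβ hsum hH hHt hn
    _ < ENNReal.ofReal (Real.logb (β ^ L) F.card) :=
        (ENNReal.ofReal_lt_ofReal_iff (Real.logb_pos (one_lt_pow₀ hβ.1 hL.ne')
          (by exact_mod_cast hFcard))).2 (logb_pow_lt_logb_pow hβ.1 hn hL (by exact_mod_cast hW)
            (by exact_mod_cast hcard))
    _ ≤ dimH (Kset β (betaValue β S)) := hS.le_dimH_Kset hβ.1 hsum hH hF hL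

end StrictMonotonicity

section PeriodicStreams

variable {β : ℝ} {m p : ℕ} {y z : Stream' Bool}

lemma drop_mul_eq_self (hz : z.drop p = z) (n : ℕ) : z.drop (n * p) = z := by
  induction n with
  | zero => rw [zero_mul, Stream'.drop_zero]
  | succ n ih => rw [Nat.succ_mul, Nat.add_comm, ← Stream'.drop_drop, hz, ih]

lemma eq_of_take_eq_of_drop_eq_self (hp : 0 < p) (h : y.take p = z.take p) (hy : y.drop p = y)
    (hz : z.drop p = z) : y = z := by
  ext i
  induction i using Nat.strong_induction_on with
  | _ i ih =>
    obtain hi | hi := lt_or_ge i p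
    · exact take_eq_take_iff.1 h i hi
    · obtain ⟨k, rfl⟩ := Nat.exists_eq_add_of_le hi
      rw [← Stream'.get_drop, ← Stream'.get_drop, hy, hz, ih k (by omega)]

lemma betaValue_pos (hβ : 1 < β) {i : ℕ} (hi : z.get i = true) : 0 < betaValue β z :=
  (summable_digit_div_pow hβ z).tsum_pos (fun _ ↦ by positivity) i
    (by rw [hi, Bool.toNat_true]; positivity)

lemma betaValue_drop_pos (hβ : 1 < β) (hp : 0 < p) (hz : z.drop p = z) {i : ℕ}
    (hi : z.get i = true) (n : ℕ) : 0 < betaValue β (z.drop n) := by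
  refine betaValue_pos hβ (i := n * p - n + i) ?_
  rw [Stream'.get_drop, ← add_assoc, Nat.add_sub_cancel' (Nat.le_mul_of_pos_right n hp),
    ← Stream'.get_drop, drop_mul_eq_self hz, hi]

lemma take_le_take_of_take_lt {n : ℕ} (h : y.take n < z.take n) (k : ℕ) : y.take k ≤ z.take k := by
  refine not_lt.1 fun hlt ↦ ?_
  obtain ⟨i, -, hi, hyi, hzi⟩ := take_lt_take_iff.1 h
  obtain ⟨j, -, hj, hzj, hyj⟩ := take_lt_take_iff.1 hlt
  rw [take_eq_take_iff] at hi hj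
  rcases lt_trichotomy i j with hij | rfl | hij
  · simp [hj i hij, hyi] at hzi
  · simp [hyi] at hyj
  · simp [hi j hij, hzj] at hyj

lemma get_zero_eq_false_of_betaValue_le (hβ : β ∈ Ioo (1 : ℝ) 2)
    (hz : betaValue β z ≤ 1 - 1 / β) : z.get 0 = false := by
  by_contra htrue
  have hβ0 : 0 < β := one_pos.trans hβ.1
  rw [betaValue_eq_head_add hβ.1, eq_true_of_ne_false htrue, Bool.toNat_true, Nat.cast_one,
    one_sub_div hβ0.ne', div_le_div_iff_of_pos_right hβ0] at hz
  linarith [hβ.2, betaValue_nonneg hβ.1 (z.drop 1)]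

lemma exists_get_succ_eq_false_of_betaValue_le (hβ : 1 < β)
    (hsum : ∑ i ∈ Finset.range (m + 1), 1 / β ^ (i + 1) = 1) (hz : betaValue β z ≤ 1 - 1 / β)
    (htail : 0 < betaValue β (z.drop (m + 1))) : ∃ j < m, z.get (j + 1) = false := by
  by_contra! hones
  have hdigits : ∑ i ∈ Finset.range m, 1 / β ^ (i + 1 + 1)
      = ∑ i ∈ Finset.range m, ((z.get (i + 1)).toNat : ℝ) / β ^ (i + 1 + 1) :=
    Finset.sum_congr rfl fun i hi ↦ by
      rw [eq_true_of_ne_false (hones i (Finset.mem_range.1 hi)), Bool.toNat_true, Nat.cast_one]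
  rw [Finset.sum_range_succ', hdigits] at hsum
  rw [betaValue_eq_sum_add hβ z (m + 1), Finset.sum_range_succ'] at hz
  have hhead : 0 ≤ ((z.get 0).toNat : ℝ) / β ^ (0 + 1) := by positivity
  have : 0 < betaValue β (z.drop (m + 1)) / β ^ (m + 1) := by positivity
  rw [zero_add, pow_one] at hsum
  linarith

lemma get_drop_zeroOnes_last (m : ℕ) : ((zeroOnes m).drop 1).get m = false := by
  rw [Stream'.get_drop, get_zeroOnes_eq_false, Nat.add_comm]

lemma runFree_of_take_lt
    (hz : ∀ n, ∃ k, (z.drop n).take k < ((zeroOnes m).drop 1).take k) : RunFree m z := by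
  refine runFree_iff.2 fun n hones ↦ ?_
  rw [take_eq_replicate_iff] at hones
  obtain ⟨k, hk⟩ := hz n
  obtain ⟨j, -, heq, hzero, -⟩ := take_lt_take_iff.1 hk
  have hmj : m < j := by
    by_contra! hle
    simp [hones j (Nat.lt_succ_of_le hle)] at hzero
  have := take_eq_take_iff.1 heq m hmj
  rw [hones m m.lt_succ_self, get_drop_zeroOnes_last] at this
  exact Bool.false_ne_true this.symm

lemma take_drop_ne_take_zeroOnes (hp : 0 < p) (hper : z.drop p = z)
    (hz : ∀ n, ∃ k, (z.drop n).take k < ((zeroOnes m).drop 1).take k) (n : ℕ) :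
    (z.drop n).take ((p + 1) * (m + 1)) ≠ (zeroOnes m).take ((p + 1) * (m + 1)) := by
  intro h
  rw [take_eq_take_iff] at h
  obtain ⟨k, hk⟩ := hz (n + 1)
  refine hk.ne (congrArg (Stream'.take k) (eq_of_take_eq_of_drop_eq_self (p := (m + 1) * p)
    (Nat.mul_pos m.succ_pos hp) (take_eq_take_iff.2 fun i hi ↦ ?_) ?_ ?_))
  · have := h (1 + i) (by linarith)
    rwa [Stream'.get_drop, ← add_assoc, ← Stream'.get_drop, ← Stream'.get_drop] at this
  · rw [Stream'.drop_drop, add_comm, ← Stream'.drop_drop, drop_mul_eq_self hper]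
  · rw [Stream'.drop_drop, add_comm, ← Stream'.drop_drop, mul_comm,
      drop_mul_eq_self (zeroOnes_drop m)]

end PeriodicStreams

section LyndonWords

variable {β : ℝ} {m : ℕ} {x y : ℕ → ℕ} {s : List ℕ}

/-- A sequence of digits in `{0, 1}`, as a stream of booleans. -/
def digitStream (x : ℕ → ℕ) : Stream' Bool :=
  fun i ↦ decide (x i = 1)

lemma digitStream_drop (x : ℕ → ℕ) (n : ℕ) :
    (digitStream x).drop n = digitStream (shiftN n x) := by
  ext i
  rw [Stream'.get_drop, add_comm]
  rfl

lemma toNat_get_digitStream (hx : ∀ i, x i ≤ 1) (i : ℕ) : ((digitStream x).get i).toNat = x i := by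
  simp only [digitStream, Stream'.get]
  have := hx i
  interval_cases x i <;> rfl

lemma betaValue_digitStream (β : ℝ) (hx : ∀ i, x i ≤ 1) :
    betaValue β (digitStream x) = ∑' i, (x i : ℝ) / β ^ (i + 1) :=
  tsum_congr fun i ↦ by rw [toNat_get_digitStream hx]

lemma exists_take_digitStream_lt_of_seqLt (hy : ∀ i, y i ≤ 1) (h : seqLt x y) :
    ∃ n, (digitStream x).take n < (digitStream y).take n := by
  obtain ⟨n, heq, hlt⟩ := h
  refine ⟨n + 1, take_lt_take_iff.2 ⟨n, n.lt_succ_self, take_eq_take_iff.2 fun i hi ↦ ?_, ?_, ?_⟩⟩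
  · simp only [digitStream, Stream'.get, heq i hi]
  · simpa [digitStream, Stream'.get] using (hlt.trans_le (hy n)).ne
  · simpa [digitStream, Stream'.get] using le_antisymm (hy n) (Nat.one_le_of_lt hlt)

lemma perSeq_le_one (hs : ∀ a ∈ s, a ≤ 1) (i : ℕ) : perSeq s i ≤ 1 := by
  rw [perSeq, List.getD_eq_getElem?_getD]
  cases h : s[i % s.length]? with
  | none => exact Nat.zero_le 1
  | some a => exact hs a (List.mem_of_getElem? h)

lemma shiftN_perSeq_mod (s : List ℕ) (n : ℕ) :
    shiftN (n % s.length) (perSeq s) = shiftN n (perSeq s) := by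
  funext i
  simp [shiftN, perSeq]

lemma digitStream_perSeq_drop_length (s : List ℕ) :
    (digitStream (perSeq s)).drop s.length = digitStream (perSeq s) := by
  rw [digitStream_drop, ← shiftN_perSeq_mod, Nat.mod_self]
  rfl

lemma digitStream_perSeq_ones_zero (m : ℕ) :
    digitStream (perSeq (List.replicate m 1 ++ [0])) = (zeroOnes m).drop 1 := by
  refine eq_of_take_eq_of_drop_eq_self m.succ_pos (take_eq_take_iff.2 fun i hi ↦ ?_) ?_ ?_
  · have hmod : i % (m + 1) = i := Nat.mod_eq_of_lt hi
    rw [Stream'.get_drop]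
    rcases (Nat.lt_succ_iff.1 hi).lt_or_eq with hlt | rfl
    · have hdigit : (List.replicate m 1 ++ [0])[i]? = some 1 := by
        rw [List.getElem?_append_left (by simpa using hlt), List.getElem?_replicate_of_lt hlt]
      simp [digitStream, zeroOnes, perSeq, Stream'.get, hmod, hdigit, hlt, add_comm 1 i,
        Nat.mod_eq_of_lt]
    · simp [digitStream, zeroOnes, perSeq, Stream'.get, add_comm 1 i]
  · have h := digitStream_perSeq_drop_length (List.replicate m 1 ++ [0])
    rwa [List.length_append, List.length_replicate, List.length_singleton] at h
  · rw [Stream'.drop_drop, add_comm, ← Stream'.drop_drop, zeroOnes_drop]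

lemma sum_one_div_pow_eq_one_of_isQuasiGreedy (hβ : 1 < β)
    (hδ : IsQuasiGreedy β (perSeq (List.replicate m 1 ++ [0]))) :
    ∑ i ∈ Finset.range (m + 1), 1 / β ^ (i + 1) = 1 := by
  have hone : betaValue β ((zeroOnes m).drop 1) = 1 := by
    rw [← digitStream_perSeq_ones_zero, betaValue_digitStream β hδ.1, hδ.2.2.1]
  have hdrop : ((zeroOnes m).drop 1).drop (m + 1) = (zeroOnes m).drop 1 := by
    rw [Stream'.drop_drop, add_comm, ← Stream'.drop_drop, zeroOnes_drop]
  have hdigits : ∑ i ∈ Finset.range m, ((((zeroOnes m).drop 1).get i).toNat : ℝ) / β ^ (i + 1)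
      = ∑ i ∈ Finset.range m, 1 / β ^ (i + 1) := by
    refine Finset.sum_congr rfl fun i hi ↦ ?_
    have : i + 1 < m + 1 := Nat.succ_lt_succ (Finset.mem_range.1 hi)
    rw [Stream'.get_drop]
    simp [zeroOnes, Stream'.get, add_comm 1 i, Nat.mod_eq_of_lt this]
  have hsplit := betaValue_eq_sum_add hβ ((zeroOnes m).drop 1) (m + 1)
  rw [hdrop, hone, Finset.sum_range_succ, hdigits, get_drop_zeroOnes_last, Bool.toNat_false,
    Nat.cast_zero, zero_div, add_zero] at hsplit
  rw [Finset.sum_range_succ, ← hsplit]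

lemma betaValue_digitStream_perSeq (hβ : 1 < β) (hne : s ≠ []) (hs : ∀ a ∈ s, a ≤ 1) :
    betaValue β (digitStream (perSeq s)) = lyndonRight β s := by
  have hsplit := betaValue_eq_sum_add hβ (digitStream (perSeq s)) s.length
  have hdigits : ∑ i ∈ Finset.range s.length,
      (((digitStream (perSeq s)).get i).toNat : ℝ) / β ^ (i + 1) = lyndonLeft β s := by
    refine Finset.sum_congr rfl fun i hi ↦ ?_
    rw [toNat_get_digitStream (perSeq_le_one hs), perSeq, Nat.mod_eq_of_lt (Finset.mem_range.1 hi)]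
  have hpow : β ^ s.length - 1 ≠ 0 :=
    (sub_pos.2 (one_lt_pow₀ hβ (List.length_pos_iff.2 hne).ne')).ne'
  rw [hdigits, digitStream_perSeq_drop_length] at hsplit
  rw [lyndonRight]
  field_simp at hsplit ⊢
  linarith

lemma lyndonRight_le_of_Ico_subset (hβ : 1 < β) (hne : s ≠ [])
    (hsub : Ico (lyndonLeft β s) (lyndonRight β s) ⊆ Ico 0 (1 - 1 / β)) :
    lyndonRight β s ≤ 1 - 1 / β := by
  have hpow : 1 < β ^ s.length := one_lt_pow₀ hβ (List.length_pos_iff.2 hne).ne'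
  have hleft : 0 ≤ lyndonLeft β s := Finset.sum_nonneg fun i _ ↦ by positivity
  rcases hleft.eq_or_lt with hzero | hpos
  · rw [lyndonRight, ← hzero, mul_zero, sub_nonneg]
    exact (div_le_one (by positivity)).2 hβ.le
  · refine ((Ico_subset_Ico_iff ?_).1 hsub).2
    rw [lyndonRight]
    exact lt_mul_of_one_lt_left hpos ((one_lt_div (by linarith)).2 (by linarith))

lemma IsBetaLyndon.seqLt_shiftN (hs : IsBetaLyndon β s) {i : ℕ} (hi : i ≠ 0) (his : i < s.length) :
    seqLt (perSeq s) (shiftN i (perSeq s)) := by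
  obtain ⟨n, heq, hlt⟩ := hs.2.2.1 i (Nat.one_le_iff_ne_zero.2 hi) his
  have htake (k : ℕ) (hk : k < s.length - i) :
      wordSeq (s.take (s.length - i)) k = perSeq s k := by
    rw [wordSeq, perSeq, Nat.mod_eq_of_lt (by omega), List.getD_eq_getElem?_getD,
      List.getElem?_take_of_lt hk, ← List.getD_eq_getElem?_getD]
  have hdrop (k : ℕ) (hk : k < s.length - i) :
      wordSeq (s.drop i) k = shiftN i (perSeq s) k := by
    simp [wordSeq, perSeq, shiftN, List.getD_eq_getElem?_getD, add_comm k i,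
      Nat.mod_eq_of_lt (show i + k < s.length by omega)]
  have hn : n < s.length - i := by
    by_contra! hge
    simp [wordSeq, hge] at hlt
  refine ⟨n, fun k hk ↦ ?_, ?_⟩
  · rw [← htake k (hk.trans hn), ← hdrop k (hk.trans hn), heq k hk]
  · rwa [← htake n hn, ← hdrop n hn]

lemma IsBetaLyndon.take_le_take_drop (hs : IsBetaLyndon β s) (n k : ℕ) :
    (digitStream (perSeq s)).take k ≤ ((digitStream (perSeq s)).drop n).take k := by
  rw [digitStream_drop, ← shiftN_perSeq_mod]
  rcases eq_or_ne (n % s.length) 0 with hzero | hne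
  · rw [hzero]
    exact le_rfl
  · obtain ⟨l, hl⟩ := exists_take_digitStream_lt_of_seqLt (fun i ↦ perSeq_le_one hs.2.1 _)
      (hs.seqLt_shiftN hne (Nat.mod_lt _ (List.length_pos_iff.2 hs.1)))
    exact take_le_take_of_take_lt hl k

lemma IsBetaLyndon.isLyndonStream (hs : IsBetaLyndon β s) (hβ : β ∈ Ioo (1 : ℝ) 2) (hm : 1 ≤ m)
    (hδ : IsQuasiGreedy β (perSeq (List.replicate m 1 ++ [0])))
    (hsub : Ico (lyndonLeft β s) (lyndonRight β s) ⊆ Ico 0 (1 - 1 / β)) :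
    IsLyndonStream m (s.length + 1) (digitStream (perSeq s)) := by
  have hlen := List.length_pos_iff.2 hs.1
  have hper := digitStream_perSeq_drop_length s
  have hle : betaValue β (digitStream (perSeq s)) ≤ 1 - 1 / β := by
    rw [betaValue_digitStream_perSeq hβ.1 hs.1 hs.2.1]
    exact lyndonRight_le_of_Ico_subset hβ.1 hs.1 hsub
  have hlt (n : ℕ) : ∃ k, ((digitStream (perSeq s)).drop n).take k
      < ((zeroOnes m).drop 1).take k := by
    rw [digitStream_drop, ← digitStream_perSeq_ones_zero]
    exact exists_take_digitStream_lt_of_seqLt hδ.1 (hs.2.2.2 _ hδ n)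
  refine ⟨get_zero_eq_false_of_betaValue_le hβ hle, ?_, hs.take_le_take_drop,
    runFree_of_take_lt hlt, take_drop_ne_take_zeroOnes hlen hper hlt⟩
  by_cases hone : (digitStream (perSeq s)).get 1 = false
  · exact ⟨0, hm, hone⟩
  · exact exists_get_succ_eq_false_of_betaValue_le hβ.1
      (sum_one_div_pow_eq_one_of_isQuasiGreedy hβ.1 hδ) hle
      (betaValue_drop_pos hβ.1 hlen hper (eq_true_of_ne_false hone) (m + 1))

end LyndonWords

/-- Let `β ∈ (1,2)` with `δ(β) = (1^m 0)^∞` for some `m ≥ 1` and let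
`[t_L, t_R) ⊆ [0, 1 - 1/β)` be a β-Lyndon interval. Then for every `t' ∈ (t_R, 1)`,
`dim_H K_β(t') < dim_H K_β(t_R)`. -/
theorem stmt_16 (β : ℝ) (hβ : β ∈ Set.Ioo (1 : ℝ) 2) (m : ℕ) (hm : 1 ≤ m)
    (hδ : IsQuasiGreedy β (perSeq (List.replicate m 1 ++ [0])))
    (s : List ℕ) (hs : IsBetaLyndon β s)
    (hsub : Set.Ico (lyndonLeft β s) (lyndonRight β s) ⊆ Set.Ico (0 : ℝ) (1 - 1 / β)) :
    ∀ t' ∈ Set.Ioo (lyndonRight β s) 1,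
      dimH (Kset β t') < dimH (Kset β (lyndonRight β s)) := by
  intro t' ht'
  have hvalue := betaValue_digitStream_perSeq hβ.1 hs.1 hs.2.1
  rw [← hvalue]
  exact (hs.isLyndonStream hβ hm hδ hsub).dimH_Kset_lt hβ
    (sum_one_div_pow_eq_one_of_isQuasiGreedy hβ.1 hδ) (hvalue ▸ ht'.1)
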